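/- arXiv:2009.05937 — 2 statements merged into one kernel-verified Lean document; each statement's English description precedes it below -/
import Mathlib

section
/- Let m ≥ 4 be an integer and q = 2^m. Let f : F_{q²} → F_{q²} be given by f(x) = x^{3q} + a₁x^{2q+1} + a₂x^{q+2} + a₃x³ where a₁, a₂, a₃ ∈ F_{q²}. If f is APN, then f is affine equivalent to G₁(x) = x³ or f is affine equivalent to G₂(x) = x^{2^{m-1}+1}. -/
/-- `f` is almost perfect nonlinear (APN): for every `a ≠ 0` and every `b`, the equation
`f (x + a) + f x = b` has at most two solutions `x`. -/
def IsAPN {F : Type*} [Field F] (f : F → F) : Prop :=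
  ∀ a : F, a ≠ 0 → ∀ b : F, {x : F | f (x + a) + f x = b}.ncard ≤ 2

/-- `L` is an affine permutation: it is bijective and `x ↦ L x - L 0` is additive
(over a field of characteristic 2, additive maps are exactly the `𝔽₂`-linear ones). -/
def IsAffinePerm {F : Type*} [Field F] (L : F → F) : Prop :=
  Function.Bijective L ∧ ∀ x y : F, L (x + y) + L 0 = L x + L y

/-- `f` and `g` are affine equivalent: `g = L₁ ∘ f ∘ L₂` for affine permutations `L₁, L₂`. -/
def AffEquiv {F : Type*} [Field F] (f g : F → F) : Prop :=
  ∃ L₁ L₂ : F → F, IsAffinePerm L₁ ∧ IsAffinePerm L₂ ∧ ∀ x : F, g x = L₁ (f (L₂ x))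

namespace Kim
open Finset

variable {K : Type*} [Field K]

/-- truncated trace -/
def T (m : ℕ) (x : K) : K := ∑ i ∈ range m, x ^ 2 ^ i

lemma T_add [CharP K 2] (m : ℕ) (x y : K) : T m (x + y) = T m x + T m y := by
  simp only [T, ← sum_add_distrib]
  exact sum_congr rfl fun i _ => add_pow_char_pow x y 2 i

lemma T_tel [CharP K 2] (m : ℕ) (t : K) : T m (t ^ 2 + t) = t ^ 2 ^ m + t := by
  induction m with
  | zero => simp [T, CharTwo.add_self_eq_zero]
  | succ n ih =>
    have : T (n + 1) (t ^ 2 + t) = T n (t ^ 2 + t) + (t ^ 2 + t) ^ 2 ^ n := by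
      simp [T, sum_range_succ]
    rw [this, ih, add_pow_char_pow, ← pow_mul, ← pow_succ']
    have := CharTwo.add_self_eq_zero (t ^ 2 ^ n)
    linear_combination this

lemma T_sq [CharP K 2] (m : ℕ) (x : K) : T m (x ^ 2) = T m x ^ 2 := by
  simp only [T]
  rw [CharTwo.sum_sq]
  exact sum_congr rfl fun i _ => by rw [← pow_mul, ← pow_mul, mul_comm]

lemma T_sq_add [CharP K 2] (m : ℕ) (x : K) : T m x ^ 2 + T m x = x ^ 2 ^ m + x := by
  rw [← T_sq, ← T_add, T_tel]

lemma sqrt_ex [Fintype K] [CharP K 2] (x : K) : ∃ s : K, s ^ 2 = x := by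
  obtain ⟨s, hs⟩ := (Finite.injective_iff_surjective.mp (frobenius_inj K 2)) x
  exact ⟨s, by simpa [frobenius_def] using hs⟩

lemma AS_ex [Fintype K] [CharP K 2] (n : ℕ) (hn : 1 ≤ n) (hc : Fintype.card K = 2 ^ n) (r : K)
    (h : T n r = 0) : ∃ t : K, t ^ 2 + t = r := by
  classical
  by_contra hne
  push Not at hne
  obtain ⟨k, rfl⟩ : ∃ k, n = k + 1 := ⟨n - 1, by omega⟩
  let φ : K → K := fun t => t ^ 2 + t
  let p : Polynomial K := ∑ i ∈ range (k + 1), Polynomial.X ^ 2 ^ i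
  have hpe : ∀ x, p.eval x = T (k + 1) x := by
    intro x; simp [p, T, Polynomial.eval_finsetSum]
  have hdeg : p.natDegree = 2 ^ k := by
    have h1 : p = (∑ i ∈ range k, Polynomial.X ^ 2 ^ i) + Polynomial.X ^ 2 ^ k := by
      simp [p, sum_range_succ]
    have h2 : (∑ i ∈ range k, (Polynomial.X : Polynomial K) ^ 2 ^ i).degree
        < (Polynomial.X ^ 2 ^ k : Polynomial K).degree := by
      rw [Polynomial.degree_X_pow]
      refine lt_of_le_of_lt (Polynomial.degree_sum_le _ _) ?_
      rw [Finset.sup_lt_iff (by exact WithBot.bot_lt_coe _)]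
      intro i hi
      rw [Polynomial.degree_X_pow]
      have := Nat.pow_lt_pow_right (a := 2) (by norm_num) (Finset.mem_range.mp hi)
      exact_mod_cast this
    rw [h1]
    apply Polynomial.natDegree_eq_of_degree_eq_some
    rw [Polynomial.degree_add_eq_right_of_degree_lt h2, Polynomial.degree_X_pow]
  have hp0 : p ≠ 0 := by
    intro h0; rw [h0] at hdeg; simp at hdeg
    exact absurd hdeg.symm (by positivity)
  -- image of φ plus r lies in the roots
  have hsub : insert r (univ.image φ) ⊆ p.roots.toFinset := by
    intro x hx
    rw [Multiset.mem_toFinset, Polynomial.mem_roots hp0, Polynomial.IsRoot, hpe]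
    rcases Finset.mem_insert.mp hx with rfl | hx
    · exact h
    · obtain ⟨t, -, rfl⟩ := Finset.mem_image.mp hx
      simp only [φ]
      rw [T_tel, ← hc, FiniteField.pow_card, CharTwo.add_self_eq_zero]
  have hcard1 := Finset.card_le_card hsub
  have hcard2 : p.roots.toFinset.card ≤ 2 ^ k :=
    (Multiset.toFinset_card_le _).trans ((Polynomial.card_roots' p).trans hdeg.le)
  have hr : r ∉ univ.image φ := by
    intro hx
    obtain ⟨t, -, ht⟩ := Finset.mem_image.mp hx
    exact hne t ht
  rw [Finset.card_insert_of_notMem hr] at hcard1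
  have hfib : (univ : Finset K).card ≤ 2 * (univ.image φ).card := by
    apply Finset.card_le_mul_card_image
    intro b hb
    obtain ⟨t, -, rfl⟩ := Finset.mem_image.mp hb
    have : (univ.filter fun x => φ x = φ t) ⊆ {t, t + 1} := by
      intro x hx
      simp only [Finset.mem_filter, φ, Finset.mem_univ, true_and] at hx
      have h2 : (2 : K) = 0 := CharTwo.two_eq_zero
      have : (x - t) * (x - (t + 1)) = 0 := by linear_combination hx + (t ^ 2 - x * t + t - x) * h2
      rcases mul_eq_zero.mp this with h | h
      · simp [sub_eq_zero.mp h]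
      · simp [sub_eq_zero.mp h]
    exact (Finset.card_le_card this).trans Finset.card_le_two
  rw [Finset.card_univ, hc, pow_succ] at hfib
  omega

/-- sums of powers over units -/
lemma sum_zpow [Fintype K] [CharP K 2] [DecidableEq K] (k : ℤ) :
    ∑ x : Kˣ, (x : K) ^ k = if ((Fintype.card K : ℤ) - 1) ∣ k then 1 else 0 := by
  have hq : 1 < Fintype.card K := Fintype.one_lt_card
  set N := Fintype.card K - 1 with hN
  have hNc : ((Fintype.card K : ℤ) - 1) = (N : ℤ) := by omega
  have hNpos : 0 < N := by omega
  have h1 : ∀ x : Kˣ, (x : K) ^ k = ((x ^ (k % N).toNat : Kˣ) : K) := by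
    intro x
    have hx : (x : K) ^ N = 1 := FiniteField.pow_card_sub_one_eq_one _ x.ne_zero
    have h3 : k = N * (k / N) + ((k % N).toNat : ℤ) := by
      rw [Int.toNat_of_nonneg (Int.emod_nonneg _ (by omega))]
      exact (Int.mul_ediv_add_emod k N).symm
    conv_lhs => rw [h3]
    rw [zpow_add₀ x.ne_zero, zpow_mul, zpow_natCast, hx, one_zpow, one_mul, zpow_natCast]
    simp
  rw [Finset.sum_congr rfl fun x _ => h1 x]
  have h2 := FiniteField.sum_pow_units K (k % N).toNat
  simp only [Units.val_pow_eq_pow_val] at h2 ⊢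
  rw [h2, hNc, CharTwo.neg_eq]
  congr 1
  rw [← Int.natCast_dvd_natCast, Int.toNat_of_nonneg (Int.emod_nonneg _ (by omega))]
  simp only [eq_iff_iff]
  rw [← hN]
  have := Int.mul_ediv_add_emod k N
  constructor
  · intro h; rw [← this]; exact dvd_add (dvd_mul_right _ _) h
  · intro h
    have h4 : k % N = k - N * (k / N) := by omega
    rw [h4]; exact dvd_sub h (dvd_mul_right _ _)

lemma sum_norm_zpow [Fintype K] [CharP K 2] [DecidableEq K] (m : ℕ)
    (hc : Fintype.card K = 2 ^ (2 * m)) (k : ℤ) :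
    ∑ x : Kˣ, ((x : K) ^ (2 ^ m + 1)) ^ k = if ((2 : ℤ) ^ m - 1) ∣ k then 1 else 0 := by
  have h := sum_zpow (K := K) ((2 ^ m + 1) * k)
  have h1 : ∀ x : Kˣ, ((x : K) ^ (2 ^ m + 1)) ^ k = (x : K) ^ (((2 : ℤ) ^ m + 1) * k) := by
    intro x
    rw [zpow_mul, ← zpow_natCast]; push_cast; rfl
  rw [Finset.sum_congr rfl fun x _ => h1 x, h, hc]
  congr 1
  have : (((2 ^ (2 * m) : ℕ) : ℤ) - 1) = (2 ^ m + 1) * (2 ^ m - 1) := by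
    push_cast; ring
  rw [this, eq_iff_iff]
  exact mul_dvd_mul_iff_left (by positivity)

lemma sum_unit_zpow [Fintype K] [CharP K 2] [DecidableEq K] (m : ℕ) (hm : 1 ≤ m)
    (hc : Fintype.card K = 2 ^ (2 * m)) (k : ℤ) :
    ∑ x : Kˣ, ((x : K) ^ (2 ^ m) / x) ^ k = if ((2 : ℤ) ^ m + 1) ∣ k then 1 else 0 := by
  have h := sum_zpow (K := K) ((2 ^ m - 1) * k)
  have h1 : ∀ x : Kˣ, ((x : K) ^ (2 ^ m) / x) ^ k = (x : K) ^ (((2 : ℤ) ^ m - 1) * k) := by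
    intro x
    rw [zpow_mul, zpow_sub₀ x.ne_zero, zpow_one, ← zpow_natCast]; push_cast; rfl
  rw [Finset.sum_congr rfl fun x _ => h1 x, h, hc]
  congr 1
  have : (((2 ^ (2 * m) : ℕ) : ℤ) - 1) = (2 ^ m - 1) * (2 ^ m + 1) := by
    push_cast; ring
  rw [this, eq_iff_iff]
  have h2 : (2 : ℤ) ^ 1 ≤ 2 ^ m := pow_le_pow_right₀ (by norm_num) hm
  exact mul_dvd_mul_iff_left (by omega)

lemma ndvd {N k : ℤ} (h0 : k ≠ 0) (h1 : k < N) (h2 : -N < k) : ¬ N ∣ k := by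
  intro h
  exact h0 (Int.eq_zero_of_abs_lt_dvd h (abs_lt.mpr ⟨h2, h1⟩))

lemma ndvd' {N k : ℤ} (h0 : 0 < k) (h1 : k ≠ N) (h2 : k < 2 * N) : ¬ N ∣ k := by
  intro h
  have : N ∣ k - N := dvd_sub h dvd_rfl
  exact ndvd (by omega) (by omega) (by omega) this

/-- facts about powers of two -/
lemma pw (i : ℕ) : (i = 0 ∧ (2 : ℤ) ^ i = 1) ∨ (i = 1 ∧ (2 : ℤ) ^ i = 2) ∨ (i = 2 ∧ (2 : ℤ) ^ i = 4)
    ∨ (3 ≤ i ∧ (8 : ℤ) ≤ 2 ^ i) := by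
  rcases i with _ | _ | _ | i
  · simp
  · simp
  · simp
  · right; right; right
    refine ⟨by omega, ?_⟩
    have := pow_le_pow_right₀ (a := (2 : ℤ)) (by norm_num) (show 3 ≤ i + 3 by omega)
    norm_num at this ⊢; exact this

lemma pwlt {i m : ℕ} (h : i < m) : 2 * (2 : ℤ) ^ i ≤ 2 ^ m := by
  rw [← pow_succ']; exact pow_le_pow_right₀ (by norm_num) h

lemma sum_mul_sum {ι : Type*} [Fintype ι] (z : ι → K) (hz : ∀ x, z x ≠ 0) (m : ℕ) (j : ℤ)
    (A : ℕ → K) (e : ℕ → ℤ) :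
    ∑ x, z x ^ j * ∑ i ∈ range m, A i * z x ^ (e i) = ∑ i ∈ range m, A i * ∑ x, z x ^ (j + e i) := by
  simp only [Finset.mul_sum]
  rw [Finset.sum_comm]
  refine sum_congr rfl fun i _ => sum_congr rfl fun x _ => ?_
  rw [zpow_add₀ (hz x)]; ring

lemma T_mono (m : ℕ) (a z : K) (e : ℤ) :
    T m (a * z ^ e) = ∑ i ∈ range m, a ^ 2 ^ i * z ^ (e * 2 ^ i) := by
  refine sum_congr rfl fun i _ => ?_
  rw [mul_pow, zpow_mul, ← zpow_natCast (z ^ e)]; push_cast; rfl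

lemma S1j [Fintype K] [CharP K 2] [DecidableEq K] (m : ℕ) (hm : 4 ≤ m)
    (hc : Fintype.card K = 2 ^ (2 * m)) (a2 a1 c b : K) (j : ℤ) (hj : -6 ≤ j) (hj' : j ≤ -4) :
    ∑ x : Kˣ, ((x : K) ^ (2 ^ m + 1)) ^ j * (1 + T m (a2 * ((x : K) ^ (2 ^ m + 1)) ^ (2 : ℤ)
      + a1 * ((x : K) ^ (2 ^ m + 1)) ^ (1 : ℤ) + c + b * ((x : K) ^ (2 ^ m + 1)) ^ (-1 : ℤ)))
    = if j = -4 then a1 ^ 4 + a2 ^ 2 else 0 := by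
  have hE := sum_norm_zpow m hc
  have hz : ∀ x : Kˣ, (x : K) ^ (2 ^ m + 1) ≠ 0 := fun x => pow_ne_zero _ x.ne_zero
  generalize hzz : (fun x : Kˣ => (x : K) ^ (2 ^ m + 1)) = z at *
  have hzx : ∀ x : Kˣ, (x : K) ^ (2 ^ m + 1) = z x := fun x => congrFun hzz x
  simp only [hzx] at *
  have hq : (16 : ℤ) ≤ 2 ^ m := by
    have := pow_le_pow_right₀ (a := (2 : ℤ)) (by norm_num) hm
    norm_num at this; exact this
  simp only [T_add, T_mono, mul_add, sum_add_distrib, sum_mul_sum z hz, hE, mul_one]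
  rw [← Finset.sum_mul, hE]
  rw [if_neg (ndvd (by omega) (by omega) (by omega))]
  have hA : ∑ i ∈ range m, a2 ^ 2 ^ i * (if ((2 : ℤ) ^ m - 1) ∣ j + 2 * 2 ^ i then (1 : K) else 0)
      = if j = -4 then a2 ^ 2 else 0 := by
    rw [Finset.sum_eq_single 1]
    · split_ifs with h1 h2 h2
      · simp
      · exact absurd h1 (ndvd (by omega) (by omega) (by omega))
      · exact absurd (h1 (by simp [h2])) (by simp)
      · simp
    · intro i hi hi1
      have h3 := pwlt (Finset.mem_range.mp hi)
      rw [if_neg, mul_zero]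
      rcases pw i with h | h | h | h
      all_goals exact ndvd (by omega) (by omega) (by omega)
    · intro h; simp at h; omega
  have hB : ∑ i ∈ range m, a1 ^ 2 ^ i * (if ((2 : ℤ) ^ m - 1) ∣ j + 1 * 2 ^ i then (1 : K) else 0)
      = if j = -4 then a1 ^ 4 else 0 := by
    rw [Finset.sum_eq_single 2]
    · split_ifs with h1 h2 h2
      · norm_num
      · exact absurd h1 (ndvd (by omega) (by omega) (by omega))
      · exact absurd (h1 (by simp [h2])) (by simp)
      · simp
    · intro i hi hi1
      have h3 := pwlt (Finset.mem_range.mp hi)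
      rw [if_neg, mul_zero]
      rcases pw i with h | h | h | h
      all_goals exact ndvd (by omega) (by omega) (by omega)
    · intro h; simp at h; omega
  have hC : ∑ i ∈ range m, b ^ 2 ^ i * (if ((2 : ℤ) ^ m - 1) ∣ j + -1 * 2 ^ i then (1 : K) else 0)
      = 0 := by
    apply Finset.sum_eq_zero
    intro i hi
    have h3 := pwlt (Finset.mem_range.mp hi)
    rw [if_neg, mul_zero]
    rcases pw i with h | h | h | h
    all_goals exact ndvd (by omega) (by omega) (by omega)
  rw [hA, hB, hC]
  split_ifs <;> ring

lemma S1 [Fintype K] [CharP K 2] (m : ℕ) (hm : 4 ≤ m)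
    (hc : Fintype.card K = 2 ^ (2 * m)) (a2 a1 c b α γ : K)
    (h : ∀ z : K, z ^ 2 ^ m = z → z ≠ 0 → z ≠ α → z ≠ γ → T m (a2 * z ^ 2 + a1 * z + c + b / z) = 1) :
    a1 ^ 4 + a2 ^ 2 = 0 := by
  classical
  have h4 := S1j m hm hc a2 a1 c b (-4) (by norm_num) (by norm_num)
  have h5 := S1j m hm hc a2 a1 c b (-5) (by norm_num) (by norm_num)
  have h6 := S1j m hm hc a2 a1 c b (-6) (by norm_num) (by norm_num)
  simp only [if_true] at h4
  rw [if_neg (by norm_num)] at h5 h6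
  rw [← h4]
  have key : ∀ x : Kˣ, ∀ w : K, w = ((x : K) ^ (2 ^ m + 1)) → 
     w ^ (-4 : ℤ) * (1 + T m (a2 * w ^ (2 : ℤ) + a1 * w ^ (1 : ℤ) + c + b * w ^ (-1 : ℤ)))
     = (α + γ) * (w ^ (-5 : ℤ) * (1 + T m (a2 * w ^ (2 : ℤ) + a1 * w ^ (1 : ℤ) + c + b * w ^ (-1 : ℤ))))
     + α * γ * (w ^ (-6 : ℤ) * (1 + T m (a2 * w ^ (2 : ℤ) + a1 * w ^ (1 : ℤ) + c + b * w ^ (-1 : ℤ)))) := by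
    intro x w hw
    have hw0 : w ≠ 0 := by rw [hw]; exact pow_ne_zero _ x.ne_zero
    have hwq : w ^ 2 ^ m = w := by
      rw [hw, ← pow_mul, add_mul, one_mul, ← pow_add, ← two_mul, pow_add, ← hc,
        FiniteField.pow_card, pow_add, pow_one, mul_comm]
    have hT : a2 * w ^ (2 : ℤ) + a1 * w ^ (1 : ℤ) + c + b * w ^ (-1 : ℤ)
        = a2 * w ^ 2 + a1 * w + c + b / w := by
      rw [zpow_one, zpow_neg_one, div_eq_mul_inv]; norm_cast
    rw [hT]
    have e5 : w ^ (-5 : ℤ) = w * w ^ (-6 : ℤ) := by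
      rw [← zpow_one_add₀ hw0]; norm_num
    have e4 : w ^ (-4 : ℤ) = w ^ 2 * w ^ (-6 : ℤ) := by
      rw [← zpow_natCast w 2, ← zpow_add₀ hw0]; norm_num
    rw [e4, e5]
    have h2 : (2 : K) = 0 := CharTwo.two_eq_zero
    by_cases hα : w = α
    · rw [hα]; linear_combination (-(α * γ * α ^ (-6 : ℤ) * (1 + T m (a2 * α ^ 2 + a1 * α + c + b / α)))) * h2
    by_cases hγ : w = γ
    · rw [hγ]; linear_combination (-(α * γ * γ ^ (-6 : ℤ) * (1 + T m (a2 * γ ^ 2 + a1 * γ + c + b / γ)))) * h2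
    rw [h w hwq hw0 hα hγ, one_add_one_eq_two, h2]; ring
  rw [Finset.sum_congr rfl fun x _ => key x _ rfl]
  rw [sum_add_distrib, ← Finset.mul_sum, ← Finset.mul_sum, h5, h6]; ring

lemma S0 [Fintype K] [CharP K 2] (m : ℕ) (hm : 4 ≤ m)
    (hc : Fintype.card K = 2 ^ (2 * m)) (δ : K)
    (h : ∀ z : K, z ^ 2 ^ m = z → z ≠ 0 → T m (δ * z ^ 3) = 1) : False := by
  classical
  have hE := sum_norm_zpow m hc
  have hz : ∀ x : Kˣ, (x : K) ^ (2 ^ m + 1) ≠ 0 := fun x => pow_ne_zero _ x.ne_zero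
  have hT : ∀ x : Kˣ, T m (δ * ((x : K) ^ (2 ^ m + 1)) ^ (3 : ℤ)) = 1 := by
    intro x
    have := h ((x : K) ^ (2 ^ m + 1)) (by
      rw [← pow_mul, add_mul, one_mul, ← pow_add, ← two_mul, pow_add, ← hc,
        FiniteField.pow_card, pow_add, pow_one, mul_comm]) (hz x)
    exact_mod_cast this
  generalize hzz : (fun x : Kˣ => (x : K) ^ (2 ^ m + 1)) = z at *
  have hzx : ∀ x : Kˣ, (x : K) ^ (2 ^ m + 1) = z x := fun x => congrFun hzz x
  simp only [hzx] at *
  have hq : (16 : ℤ) ≤ 2 ^ m := by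
    have := pow_le_pow_right₀ (a := (2 : ℤ)) (by norm_num) hm
    norm_num at this; exact this
  have h1 : ∑ x, z x ^ (-3 : ℤ) * T m (δ * z x ^ (3 : ℤ)) = 0 := by
    rw [Finset.sum_congr rfl fun x _ => by rw [hT x, mul_one], hE]
    rw [if_neg (ndvd (by omega) (by omega) (by omega))]
  simp only [T_mono, sum_mul_sum z hz, hE] at h1
  rw [Finset.sum_eq_single 0] at h1
  · simp at h1
    have := h 1 (by simp) one_ne_zero
    rw [h1] at this
    simp [T] at this
  · intro i hi hi1
    have h3 := pwlt (Finset.mem_range.mp hi)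
    rw [if_neg, mul_zero]
    rcases pw i with h | h | h | h
    · omega
    · exact ndvd' (by omega) (by omega) (by omega)
    · exact ndvd' (by omega) (by omega) (by omega)
    · refine ndvd' (by omega) ?_ (by omega)
      obtain ⟨i', rfl⟩ : ∃ i', i = i' + 3 := ⟨i - 3, by omega⟩
      obtain ⟨m', rfl⟩ : ∃ m', m = m' + 4 := ⟨m - 4, by omega⟩
      have e1 : (2 : ℤ) ^ (i' + 3) = 8 * 2 ^ i' := by ring
      have e2 : (2 : ℤ) ^ (m' + 4) = 16 * 2 ^ m' := by ring
      omega
  · intro h; simp at h; omega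

lemma S2j [Fintype K] [CharP K 2] [DecidableEq K] (m : ℕ) (hm : 4 ≤ m)
    (hc : Fintype.card K = 2 ^ (2 * m)) (A D C G a b : K) (j : ℤ) (hj : -6 ≤ j) (hj' : j ≤ -4) :
    ∑ x : Kˣ, ((x : K) ^ (2 ^ m) / x) ^ j * (T m (A * ((x : K) ^ (2 ^ m) / x) ^ (-2 : ℤ)
      + D + C * ((x : K) ^ (2 ^ m) / x) ^ (2 : ℤ) + G * ((x : K) ^ (2 ^ m) / x) ^ (4 : ℤ))
      + (a * ((x : K) ^ (2 ^ m) / x) ^ (-2 : ℤ) + b * ((x : K) ^ (2 ^ m) / x) ^ (2 : ℤ)))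
    = if j = -4 then C ^ 2 + G else 0 := by
  have hE := sum_unit_zpow m (by omega) hc
  have hz : ∀ x : Kˣ, (x : K) ^ (2 ^ m) / x ≠ 0 := fun x =>
    div_ne_zero (pow_ne_zero _ x.ne_zero) x.ne_zero
  generalize hzz : (fun x : Kˣ => (x : K) ^ (2 ^ m) / (x : K)) = z at *
  have hzx : ∀ x : Kˣ, (x : K) ^ (2 ^ m) / (x : K) = z x := fun x => congrFun hzz x
  simp only [hzx] at *
  have hq : (16 : ℤ) ≤ 2 ^ m := by
    have := pow_le_pow_right₀ (a := (2 : ℤ)) (by norm_num) hm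
    norm_num at this; exact this
  have hcomb : ∀ (u : K) (e : ℤ), ∑ x, z x ^ j * (u * z x ^ e) = u * ∑ x, z x ^ (j + e) := by
    intro u e
    rw [Finset.mul_sum]
    refine sum_congr rfl fun x _ => ?_
    rw [zpow_add₀ (hz x)]; ring
  simp only [T_add, T_mono, mul_add, sum_add_distrib, sum_mul_sum z hz, hE, hcomb]
  rw [← Finset.sum_mul, hE]
  rw [if_neg (ndvd (by omega) (by omega) (by omega)),
    if_neg (ndvd (by omega) (by omega) (by omega)), if_neg (ndvd (by omega) (by omega) (by omega))]
  have hA : ∑ i ∈ range m, A ^ 2 ^ i * (if ((2 : ℤ) ^ m + 1) ∣ j + -2 * 2 ^ i then (1 : K) else 0)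
      = 0 := by
    apply Finset.sum_eq_zero
    intro i hi
    have hi' := Finset.mem_range.mp hi
    have h3 := pwlt hi'
    rw [if_neg, mul_zero]
    rw [← Int.dvd_neg]
    have h5 : 4 * (2 : ℤ) ^ i ≤ 2 ^ m ∨ (2 : ℤ) ^ m = 2 * 2 ^ i := by
      rcases Nat.lt_or_ge (i + 1) m with h | h
      · left; have := pwlt h; rw [pow_succ] at this; omega
      · right; rw [← pow_succ']; congr 1; omega
    rcases pw i with h | h | h | h
    all_goals exact ndvd' (by omega) (by omega) (by omega)
  have hC : ∑ i ∈ range m, C ^ 2 ^ i * (if ((2 : ℤ) ^ m + 1) ∣ j + 2 * 2 ^ i then (1 : K) else 0)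
      = if j = -4 then C ^ 2 else 0 := by
    rw [Finset.sum_eq_single 1]
    · split_ifs with h1 h2 h2
      · norm_num
      · exact absurd h1 (ndvd (by omega) (by omega) (by omega))
      · exact absurd (h1 (by simp [h2])) (by simp)
      · simp
    · intro i hi hi1
      have h3 := pwlt (Finset.mem_range.mp hi)
      rw [if_neg, mul_zero]
      rcases pw i with h | h | h | h
      all_goals exact ndvd (by omega) (by omega) (by omega)
    · intro h; simp at h; omega
  have hG : ∑ i ∈ range m, G ^ 2 ^ i * (if ((2 : ℤ) ^ m + 1) ∣ j + 4 * 2 ^ i then (1 : K) else 0)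
      = if j = -4 then G else 0 := by
    rw [Finset.sum_eq_single 0]
    · split_ifs with h1 h2 h2
      · norm_num
      · exact absurd h1 (ndvd (by omega) (by omega) (by omega))
      · exact absurd (h1 (by simp [h2])) (by simp)
      · simp
    · intro i hi hi1
      have hi' := Finset.mem_range.mp hi
      have h3 := pwlt hi'
      rw [if_neg, mul_zero]
      have h5 : 4 * (2 : ℤ) ^ i ≤ 2 ^ m ∨ (2 : ℤ) ^ m = 2 * 2 ^ i := by
        rcases Nat.lt_or_ge (i + 1) m with h | h
        · left; have := pwlt h; rw [pow_succ] at this; omega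
        · right; rw [← pow_succ']; congr 1; omega
      rcases pw i with h | h | h | h
      · omega
      all_goals exact ndvd' (by omega) (by omega) (by omega)
    · intro h; simp at h; omega
  rw [hA, hC, hG]
  split_ifs <;> ring

lemma S2 [Fintype K] [CharP K 2] (m : ℕ) (hm : 4 ≤ m)
    (hc : Fintype.card K = 2 ^ (2 * m)) (A D C G a b s0 s1 s2 : K)
    (h : ∀ x v : K, x ≠ 0 → v = x ^ 2 ^ m / x → s0 * v⁻¹ + s1 + s2 * v ≠ 0 →
      T m (A * v ^ (-2 : ℤ) + D + C * v ^ (2 : ℤ) + G * v ^ (4 : ℤ)) 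
        + (a * v ^ (-2 : ℤ) + b * v ^ (2 : ℤ)) = 0) :
    s2 * (C ^ 2 + G) = 0 := by
  classical
  have h4 := S2j m hm hc A D C G a b (-4) (by norm_num) (by norm_num)
  have h5 := S2j m hm hc A D C G a b (-5) (by norm_num) (by norm_num)
  have h6 := S2j m hm hc A D C G a b (-6) (by norm_num) (by norm_num)
  simp only [if_true] at h4
  rw [if_neg (by norm_num)] at h5 h6
  rw [← h4]
  have key : ∀ x : Kˣ, ∀ v R : K, v = ((x : K) ^ (2 ^ m) / x) →
     R = (T m (A * v ^ (-2 : ℤ) + D + C * v ^ (2 : ℤ) + G * v ^ (4 : ℤ)) 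
        + (a * v ^ (-2 : ℤ) + b * v ^ (2 : ℤ))) →
     s2 * (v ^ (-4 : ℤ) * R) = - s1 * (v ^ (-5 : ℤ) * R) - s0 * (v ^ (-6 : ℤ) * R) := by
    intro x v R hv hR
    have hv0 : v ≠ 0 := by rw [hv]; exact div_ne_zero (pow_ne_zero _ x.ne_zero) x.ne_zero
    have e6 : v ^ (-6 : ℤ) = v⁻¹ * v ^ (-5 : ℤ) := by
      rw [← zpow_neg_one, ← zpow_add₀ hv0]; norm_num
    have e4 : v ^ (-4 : ℤ) = v * v ^ (-5 : ℤ) := by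
      rw [← zpow_one_add₀ hv0]; norm_num
    rw [e4, e6]
    by_cases hS : s0 * v⁻¹ + s1 + s2 * v = 0
    · linear_combination (v ^ (-5 : ℤ) * R) * hS
    · rw [hR, h x v x.ne_zero hv hS]; ring
  rw [Finset.mul_sum, Finset.sum_congr rfl fun x _ => key x _ _ rfl rfl]
  rw [sum_sub_distrib, ← Finset.mul_sum, ← Finset.mul_sum, h5, h6]; ring

/-- polarisation of `c0 x³ + c1 x² σx + c2 x (σx)² + c3 (σx)³` -/
def P (σ : K →+* K) (c0 c1 c2 c3 x a : K) : K :=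
  c0 * (x ^ 2 * a + x * a ^ 2) + c1 * (x ^ 2 * σ a + a ^ 2 * σ x)
    + c2 * (x * σ a ^ 2 + a * σ x ^ 2) + c3 * (σ x ^ 2 * σ a + σ x * σ a ^ 2)

lemma third [Fintype K] (m : ℕ) (hm : 4 ≤ m) (hc : Fintype.card K = 2 ^ (2 * m))
    (σ : K →+* K) (hσ : ∀ x, σ x = x ^ 2 ^ m) : ∃ t : K, σ t = t ∧ t ≠ 0 ∧ t ≠ 1 := by
  by_contra hne
  push Not at hne
  have h := (FiniteField.forall_pow_eq_one_iff K (2 ^ m + 1)).mp (by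
    intro x
    have h1 := hne ((x : K) ^ (2 ^ m + 1)) (by
      rw [hσ, ← pow_mul, add_mul, one_mul, ← pow_add, ← two_mul, pow_add, ← hc,
        FiniteField.pow_card, pow_add, pow_one, mul_comm]) (pow_ne_zero _ x.ne_zero)
    ext; simpa using h1)
  have h2 := Nat.le_of_dvd (by positivity) h
  rw [hc, two_mul, pow_add] at h2
  have h3 : 2 ^ 4 ≤ 2 ^ m := Nat.pow_le_pow_right (by norm_num) hm
  have h4 : 16 * 2 ^ m ≤ 2 ^ m * 2 ^ m := Nat.mul_le_mul_right _ h3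
  omega

lemma nonfix [Fintype K] (m : ℕ) (hm : 4 ≤ m) (hc : Fintype.card K = 2 ^ (2 * m))
    (σ : K →+* K) (hσ : ∀ x, σ x = x ^ 2 ^ m) : ∃ t : K, σ t ≠ t := by
  by_contra hne
  push Not at hne
  have h3 : 2 ^ 4 ≤ 2 ^ m := Nat.pow_le_pow_right (by norm_num) hm
  have h := (FiniteField.forall_pow_eq_one_iff K (2 ^ m - 1)).mp (by
    intro x
    have h1 := hne (x : K)
    rw [hσ] at h1
    have h5 : (x : K) ^ (2 ^ m - 1) * x = 1 * x := by
      rw [← pow_succ, one_mul, Nat.sub_add_cancel (by omega), h1]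
    ext; simpa using mul_right_cancel₀ x.ne_zero h5)
  have h2 := Nat.le_of_dvd (by omega) h
  rw [hc, two_mul, pow_add] at h2
  have h4 : 16 * 2 ^ m ≤ 2 ^ m * 2 ^ m := Nat.mul_le_mul_right _ h3
  omega

lemma T_two (m : ℕ) (σ : K →+* K) (hσ : ∀ x, σ x = x ^ 2 ^ m) (r : K) :
    T (2 * m) r = T m (r) + T m (σ r) := by
  simp only [T]
  rw [two_mul, Finset.sum_range_add]
  congr 1
  refine sum_congr rfl fun i _ => ?_
  rw [hσ, ← pow_mul, ← pow_add]

lemma fixAS [Fintype K] [CharP K 2] (m : ℕ) (hm : 4 ≤ m) (hc : Fintype.card K = 2 ^ (2 * m))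
    (σ : K →+* K) (hσ : ∀ x, σ x = x ^ 2 ^ m) (r : K) (hr : σ r = r) (hT : T m r ≠ 1) :
    ∃ t : K, σ t = t ∧ t ^ 2 + t = r := by
  obtain ⟨t, ht⟩ := AS_ex (2 * m) (by omega) hc r (by
    rw [T_two m σ hσ, hr, CharTwo.add_self_eq_zero])
  refine ⟨t, ?_, ht⟩
  have h1 := T_tel m t
  rw [ht, ← hσ] at h1
  have h2 := T_sq_add m r
  rw [← hσ, hr, CharTwo.add_self_eq_zero] at h2
  have h3 : T m r * (T m r + 1) = 0 := by linear_combination h2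
  rcases mul_eq_zero.mp h3 with h | h
  · rw [h] at h1; exact (CharTwo.add_eq_zero.mp h1.symm)
  · exact absurd (CharTwo.add_eq_zero.mp h) hT

lemma sqfix [CharP K 2] {σ : K →+* K} {s x : K} (hs : s ^ 2 = x) (hx : σ x = x) : σ s = s := by
  have : (σ s + s) ^ 2 = 0 := by
    rw [CharTwo.add_sq, ← map_pow, hs, hx, CharTwo.add_self_eq_zero]
  exact CharTwo.add_eq_zero.mp (pow_eq_zero_iff (by norm_num) |>.mp this)

lemma A3 [Fintype K] [CharP K 2] (m : ℕ) (hm : 4 ≤ m) (hc : Fintype.card K = 2 ^ (2 * m))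
    (σ : K →+* K) (hσ : ∀ x, σ x = x ^ 2 ^ m) (α β : K) (hα : σ α = α) (hβ : σ β = β)
    (H : ∀ u s t : K, σ u = u → σ s = s → σ t = t →
      s ^ 2 * u + s * u ^ 2 + α * (t ^ 2 + t) = 0 → s ^ 2 + u ^ 2 * t + β * (t ^ 2 + t) = 0 →
      (s = 0 ∧ t = 0) ∨ (s = u ∧ t = 1)) : False := by
  obtain ⟨τ, hτ, hτ0, hτ1⟩ := third m hm hc σ hσ
  have h2 : (2 : K) = 0 := CharTwo.two_eq_zero
  -- trace condition
  have HT : ∀ u g : K, σ u = u → σ g = g → u ≠ 0 → u ^ 2 + β ≠ 0 → α + u * β ≠ 0 →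
      g ^ 2 * (α + u * β) ^ 2 = u ^ 4 * (u ^ 2 + β) → T m g = 1 := by
    intro u g hu hg hu0 hub hz hgr
    by_contra hT
    have hT2 : T m (g ^ 2) ≠ 1 := by
      rw [T_sq]; intro h
      apply hT
      have : (T m g + 1) ^ 2 = 0 := by rw [CharTwo.add_sq, h, one_pow, CharTwo.add_self_eq_zero]
      exact CharTwo.add_eq_zero.mp (pow_eq_zero_iff (by norm_num) |>.mp this)
    obtain ⟨t, ht, htr⟩ := fixAS m hm hc σ hσ (g ^ 2) (by rw [map_pow, hg]) hT2
    obtain ⟨y, hy⟩ : ∃ y, y = u ^ 2 * (u ^ 2 + β) / (α + u * β) := ⟨_, rfl⟩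
    have hy0 : y ≠ 0 := by rw [hy]; exact div_ne_zero (mul_ne_zero (pow_ne_zero _ hu0) hub) hz
    have hyz : y * (α + u * β) = u ^ 2 * (u ^ 2 + β) := by rw [hy]; field_simp
    have hσy : σ y = y := by rw [hy]; simp [hu, hα, hβ]
    have hyr : y ^ 2 = (u ^ 2 + β) * (t ^ 2 + t) := by
      apply mul_right_cancel₀ (pow_ne_zero 2 hz)
      rw [htr, mul_assoc, hgr, ← mul_pow, hyz]; ring
    have hyr2 : (α + u * β) * (t ^ 2 + t) = u ^ 2 * y := by
      apply mul_left_cancel₀ (mul_ne_zero hub hz)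
      linear_combination (-(α + u * β) ^ 2) * hyr + (α + u * β) * y * hyz
    have := H u (u * t + y) t hu (by simp [hu, ht, hσy]) ht (by grind) (by grind)
    rcases this with ⟨h1, h3⟩ | ⟨h1, h3⟩
    · rw [h3] at h1; apply hy0; linear_combination h1
    · rw [h3] at h1; apply hy0; linear_combination h1
  by_cases hb0 : β = 0
  · subst hb0
    by_cases ha0 : α = 0
    · subst ha0
      have := H 0 0 τ (by simp) (by simp) hτ (by ring) (by ring)
      rcases this with ⟨_, h⟩ | ⟨_, h⟩
      · exact hτ0 h
      · exact hτ1 h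
    · refine S0 m hm hc α⁻¹ ?_
      intro z hz hz0
      have hz' : σ z = z := by rw [hσ, hz]
      refine HT z _ hz' (by simp [hz', hα]) hz0 (by simpa using hz0) (by simpa using ha0) ?_
      field_simp; ring
  · obtain ⟨μ, hμ⟩ := sqrt_ex β
    have hσμ := sqfix hμ hβ
    have hμ0 : μ ≠ 0 := by rintro rfl; apply hb0; rw [← hμ]; ring
    subst hμ
    have key : ∀ z : K, z ^ 2 ^ m = z → z ≠ 0 → z ≠ α → z ≠ α + μ ^ 3 →
        T m (1 / μ ^ 6 * z ^ 2 + (α + μ ^ 3) / μ ^ 6 * z + α ^ 2 / μ ^ 6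
          + α ^ 2 * (α + μ ^ 3) / μ ^ 6 / z) = 1 := by
      intro z hz hz0 hzα hzγ
      have hz' : σ z = z := by rw [hσ, hz]
      refine HT ((z + α) / μ ^ 2) _ (by simp [hz', hα, hσμ]) (by simp [hz', hα, hσμ]) ?_ ?_ ?_ ?_
      · refine div_ne_zero ?_ (by simpa using hμ0)
        intro h; exact hzα (CharTwo.add_eq_zero.mp h)
      · intro h
        have h5 : ((z + α) / μ ^ 2 + μ) ^ 2 = 0 := by rw [CharTwo.add_sq]; exact h
        have h6 := CharTwo.add_eq_zero.mp (pow_eq_zero_iff (by norm_num) |>.mp h5)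
        rw [div_eq_iff (by simpa using hμ0)] at h6
        apply hzγ; grind
      · have : α + (z + α) / μ ^ 2 * μ ^ 2 = z := by
          rw [div_mul_cancel₀ _ (by simpa using hμ0)]; linear_combination α * h2
        rw [this]; exact hz0
      · have : α + (z + α) / μ ^ 2 * μ ^ 2 = z := by
          rw [div_mul_cancel₀ _ (by simpa using hμ0)]; linear_combination α * h2
        rw [this]
        field_simp
        grind
    have h1 := S1 m hm hc _ _ _ _ _ _ key
    have hα0 : α = 0 := by
      have h3 : (((α + μ ^ 3) / μ ^ 6) ^ 2 + 1 / μ ^ 6) ^ 2 = 0 := by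
        rw [CharTwo.add_sq, ← h1]; ring
      have h4 := pow_eq_zero_iff (by norm_num) |>.mp h3
      field_simp at h4
      have h5 : α ^ 2 = 0 := by grind
      exact pow_eq_zero_iff (by norm_num) |>.mp h5
    subst hα0
    have h3 := key (μ ^ 3 * τ) (by rw [← hσ]; simp [hσμ, hτ]) (mul_ne_zero (by simpa using hμ0) hτ0)
      (mul_ne_zero (by simpa using hμ0) hτ0) (by
        intro h
        apply hτ1
        apply mul_left_cancel₀ (pow_ne_zero 3 hμ0)
        linear_combination h)
    have h4 : 1 / μ ^ 6 * (μ ^ 3 * τ) ^ 2 + (0 + μ ^ 3) / μ ^ 6 * (μ ^ 3 * τ) + 0 ^ 2 / μ ^ 6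
          + 0 ^ 2 * (0 + μ ^ 3) / μ ^ 6 / (μ ^ 3 * τ) = τ ^ 2 + τ := by
      field_simp; ring
    rw [h4, T_tel, ← hσ, hτ, CharTwo.add_self_eq_zero] at h3
    exact zero_ne_one h3

lemma A2 [Fintype K] [CharP K 2] (m : ℕ) (hm : 4 ≤ m) (hc : Fintype.card K = 2 ^ (2 * m))
    (σ : K →+* K) (hσ : ∀ x, σ x = x ^ 2 ^ m) (hss : ∀ x, σ (σ x) = x) (C0 C1 C3 : K) (h0 : C0 ≠ 0)
    (H : ∀ u v s t : K, σ u = u → σ v = v → σ s = s → σ t = t → ¬ (u = 0 ∧ v = 0) →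
      C0 * (s ^ 2 * u + s * u ^ 2) + C1 * (s ^ 2 * v + u ^ 2 * t) + C3 * (t ^ 2 * v + t * v ^ 2) = 0 →
      (s = 0 ∧ t = 0) ∨ (s = u ∧ t = v)) : False := by
  obtain ⟨τ, hτ, hτ0, hτ1⟩ := third m hm hc σ hσ
  have h2 : (2 : K) = 0 := CharTwo.two_eq_zero
  obtain ⟨ρ, hρ⟩ : ∃ ρ, C1 = C0 * ρ := ⟨C1 / C0, by field_simp⟩
  subst hρ
  by_cases hf : σ ρ = ρ
  · by_cases hρ0 : ρ = 0
    · have := H 1 0 0 1 (by simp) (by simp) (by simp) (by simp) (by simp) (by rw [hρ0]; ring)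
      simp at this
    · have := H 1 0 τ ((τ ^ 2 + τ) / ρ) (by simp) (by simp) hτ (by simp [hτ, hf]) (by simp)
        (by field_simp; grind)
      simp [hτ0, hτ1] at this
  · obtain ⟨κ, hκ⟩ : ∃ κ, C3 = C0 * κ := ⟨C3 / C0, by field_simp⟩
    subst hκ
    have hd : ρ + σ ρ ≠ 0 := fun h => hf (CharTwo.add_eq_zero.mp h).symm
    obtain ⟨β, hβ⟩ : ∃ β, β = (κ + σ κ) / (ρ + σ ρ) := ⟨_, rfl⟩
    have hσβ : σ β = β := by
      rw [hβ]; simp [hss, add_comm]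
    have hβm : β * (ρ + σ ρ) = κ + σ κ := by rw [hβ]; field_simp
    have hσα : σ (κ + β * ρ) = κ + β * ρ := by
      simp only [map_add, map_mul, hσβ]; grind
    refine A3 m hm hc σ hσ (κ + β * ρ) β hσα hσβ ?_
    intro u s t hu hs ht h3 h4
    refine H u 1 s t hu (by simp) hs ht (by simp) ?_
    linear_combination C0 * h3 + C0 * ρ * h4 - C0 * β * ρ * (t ^ 2 + t) * h2

lemma A1 [Fintype K] [CharP K 2] (m : ℕ) (hm : 4 ≤ m) (hc : Fintype.card K = 2 ^ (2 * m))
    (σ : K →+* K) (hσ : ∀ x, σ x = x ^ 2 ^ m) (hss : ∀ x, σ (σ x) = x) (c0 c1 c2 c3 : K)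
    (H : ∀ a x : K, a ≠ 0 → P σ c0 c1 c2 c3 x a = 0 → x = 0 ∨ x = a)
    (hB : (c0 * σ c1 + c2 * σ c3) + (c0 * σ c0 + c3 * σ c3 + c1 * σ c1 + c2 * σ c2)
      + (c1 * σ c0 + c3 * σ c2) = 0) : False := by
  obtain ⟨τ, hτ, hτ0, hτ1⟩ := third m hm hc σ hσ
  obtain ⟨e0, he0⟩ := nonfix m hm hc σ hσ
  have hC0 : c0 + c1 + c2 + c3 ≠ 0 := by
    intro h
    have := H 1 τ one_ne_zero (by
      simp only [P, hτ, map_one]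
      linear_combination (τ ^ 2 + τ) * h)
    rcases this with h | h
    · exact hτ0 h
    · exact hτ1 h
  have hσC0 : σ (c0 + c1 + c2 + c3) ≠ 0 := (map_ne_zero σ).mpr hC0
  have hC2 : (c0 + c1 + c2 + c3) * ((σ c0 + σ c1) * σ e0 ^ 2 + (σ c2 + σ c3) * e0 ^ 2)
      = (σ c0 + σ c1 + σ c2 + σ c3) * ((c0 + c1) * e0 ^ 2 + (c2 + c3) * σ e0 ^ 2) := by
    grind
  obtain ⟨β, hβ⟩ : ∃ β, β = ((c0 + c1) * e0 ^ 2 + (c2 + c3) * σ e0 ^ 2) / (c0 + c1 + c2 + c3) :=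
    ⟨_, rfl⟩
  have hσβ : σ β = β := by
    rw [hβ, map_div₀, div_eq_div_iff hσC0 hC0]
    simp only [map_add, map_mul, map_pow, hss]
    linear_combination hC2
  have hβm : β * (c0 + c1 + c2 + c3) = ((c0 + c1) * e0 ^ 2 + (c2 + c3) * σ e0 ^ 2) := by
    rw [hβ, div_mul_cancel₀ _ hC0]
  obtain ⟨μ, hμ⟩ := sqrt_ex β
  have hσμ := sqfix hμ hσβ
  subst hμ
  obtain ⟨e, he⟩ : ∃ e, e = e0 + μ := ⟨_, rfl⟩
  have hσe : σ e = σ e0 + μ := by rw [he, map_add, hσμ]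
  have hne : σ e ≠ e := by
    rw [hσe, he]; intro h; exact he0 (add_right_cancel h)
  have hC2e : (c0 + c1) * e ^ 2 + (c2 + c3) * σ e ^ 2 = 0 := by
    rw [hσe, he]; grind
  have indep : ∀ s t : K, σ s = s → σ t = t → s + t * e = 0 → s = 0 ∧ t = 0 := by
    intro s t hs ht h
    have h1 := congrArg σ h
    simp only [map_add, map_mul, hs, ht, map_zero] at h1
    have h3 : t * (σ e - e) = 0 := by linear_combination h1 - h
    rcases mul_eq_zero.mp h3 with h4 | h4
    · subst h4; exact ⟨by simpa using h, rfl⟩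
    · exact absurd (sub_eq_zero.mp h4) hne
  refine A2 m hm hc σ hσ hss (c0 + c1 + c2 + c3) ((c0 + c2) * e + (c1 + c3) * σ e)
    (c0 * e ^ 3 + c1 * e ^ 2 * σ e + c2 * e * σ e ^ 2 + c3 * σ e ^ 3) hC0 ?_
  intro u v s t hu hv hs ht huv h
  have h5 := H (u + v * e) (s + t * e) (fun h => huv (indep u v hu hv h)) (by
    simp only [P, map_add, map_mul, hu, hv, hs, ht]
    grind)
  rcases h5 with h6 | h6
  · exact Or.inl (indep s t hs ht h6)
  · right
    have := indep (s - u) (t - v) (by simp [hs, hu]) (by simp [ht, hv]) (by linear_combination h6)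
    exact ⟨sub_eq_zero.mp this.1, sub_eq_zero.mp this.2⟩

lemma A0 [Fintype K] [CharP K 2] (m : ℕ) (hm : 4 ≤ m) (hc : Fintype.card K = 2 ^ (2 * m))
    (σ : K →+* K) (hσ : ∀ x, σ x = x ^ 2 ^ m) (hss : ∀ x, σ (σ x) = x) (c0 c1 c2 c3 : K)
    (H : ∀ a x : K, a ≠ 0 → P σ c0 c1 c2 c3 x a = 0 → x = 0 ∨ x = a) (x0 : K) (hx0 : x0 ≠ 0)
    (hB : (c0 * σ c1 + c2 * σ c3) * x0 ^ 2
      + (c0 * σ c0 + c3 * σ c3 + c1 * σ c1 + c2 * σ c2) * x0 * σ x0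
      + (c1 * σ c0 + c3 * σ c2) * σ x0 ^ 2 = 0) : False := by
  refine A1 m hm hc σ hσ hss (c0 * x0 ^ 3) (c1 * x0 ^ 2 * σ x0) (c2 * x0 * σ x0 ^ 2)
    (c3 * σ x0 ^ 3) ?_ ?_
  · intro a x ha hP
    have := H (x0 * a) (x0 * x) (mul_ne_zero hx0 ha) (by
      rw [← hP]; simp only [P, map_mul]; ring)
    rcases this with h | h
    · left; simpa [hx0] using h
    · right; exact mul_left_cancel₀ hx0 h
  · simp only [map_mul, map_pow, hss]
    linear_combination (x0 * σ x0) ^ 2 * hB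

lemma I1 [Fintype K] [CharP K 2] (m : ℕ) (hm : 4 ≤ m) (hc : Fintype.card K = 2 ^ (2 * m))
    (σ : K →+* K) (hσ : ∀ x, σ x = x ^ 2 ^ m) (hss : ∀ x, σ (σ x) = x) (c0 c1 c2 c3 : K)
    (H : ∀ a x : K, a ≠ 0 → P σ c0 c1 c2 c3 x a = 0 → x = 0 ∨ x = a)
    (p01 p03 p12 p23 : K)
    (h01 : p01 = c0 * σ c2 + c1 * σ c3) (h03 : p03 = c0 * σ c0 + c3 * σ c3)
    (h12 : p12 = c1 * σ c1 + c2 * σ c2) (h23 : p23 = c2 * σ c0 + c3 * σ c1)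
    (h02 : c0 * σ c1 + c2 * σ c3 = 0) (hw : p03 + p12 ≠ 0) : p23 * p12 = 0 := by
  have h2 : (2 : K) = 0 := CharTwo.two_eq_zero
  have h13 : c1 * σ c0 + c3 * σ c2 = 0 := by
    have := congrArg σ h02
    simp only [map_add, map_mul, hss, map_zero] at this
    linear_combination this
  obtain ⟨w, hwd⟩ : ∃ w, w = p03 + p12 := ⟨_, rfl⟩
  rw [← hwd] at hw
  obtain ⟨s0, hs0⟩ := sqrt_ex p01
  obtain ⟨s1, hs1⟩ := sqrt_ex w
  obtain ⟨s2, hs2⟩ := sqrt_ex p23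
  have hσ01 : σ p01 = p23 := by rw [h01, h23]; simp only [map_add, map_mul, hss]; ring
  have hσ23 : σ p23 = p01 := by rw [h01, h23]; simp only [map_add, map_mul, hss]; ring
  have hσ12 : σ p12 = p12 := by rw [h12]; simp only [map_add, map_mul, hss]; ring
  have hσw : σ w = w := by rw [hwd, h03, h12]; simp only [map_add, map_mul, hss]; ring
  have hpl : p01 * p23 + p03 * p12 = 0 := by
    rw [h01, h23, h03, h12]; grind
  have key := S2 m hm hc (p01 * p12 / w ^ 2) (p12 ^ 2 / w ^ 2) (p23 * p03 / w ^ 2)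
    (p23 ^ 2 / w ^ 2) (p01 / w) (p23 / w) s0 s1 s2 (by
    intro a v ha hv hS
    rw [← hσ] at hv
    have hσa : σ a ≠ 0 := by simpa using ha
    have hv0 : v ≠ 0 := by rw [hv]; exact div_ne_zero hσa ha
    have hva : σ a = a * v := by rw [hv]; field_simp
    have hσv : σ v = v⁻¹ := by rw [hv]; simp [hss]
    obtain ⟨A, hA⟩ : ∃ A, A = p01 * v⁻¹ ^ 2 + w + p23 * v ^ 2 := ⟨_, rfl⟩
    have hA0 : A ≠ 0 := by
      have : A = (s0 * v⁻¹ + s1 + s2 * v) ^ 2 := by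
        rw [CharTwo.add_sq, CharTwo.add_sq, hA, ← hs0, ← hs1, ← hs2]; ring
      rw [this]; exact pow_ne_zero _ hS
    have hσA : σ A = A := by
      rw [hA]; simp only [map_add, map_mul, map_pow, map_inv₀, hσv, inv_inv, hσ01, hσ23, hσw]; ring
    obtain ⟨y, hy⟩ : ∃ y, y = A / w := ⟨_, rfl⟩
    have hyw : y * w = A := by rw [hy]; field_simp
    have hy0 : y ≠ 0 := by rw [hy]; exact div_ne_zero hA0 hw
    have hσy : σ y = y := by rw [hy, map_div₀, hσA, hσw]
    obtain ⟨r, hr⟩ : ∃ r, r = A * (p12 + p23 * v ^ 2) / w ^ 2 := ⟨_, rfl⟩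
    have hrw : r * w = y * (p12 + p23 * v ^ 2) := by rw [hr, hy]; field_simp
    have hσr : σ r = r + y ^ 2 + y := by
      have h1 : σ r * w = y * (p12 + p01 * v⁻¹ ^ 2) := by
        have := congrArg σ hrw
        simp only [map_add, map_mul, map_pow, hσw, hσy, hσ12, hσ23, hσv] at this
        exact this
      apply mul_right_cancel₀ hw
      grind
    have hG0 : c0 + c1 * v + c2 * v ^ 2 + c3 * v ^ 3 ≠ 0 := by
      intro h
      obtain ⟨τ, hτ, hτ0, hτ1⟩ := third m hm hc σ hσ
      have := H a (τ * a) ha (by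
        simp only [P, map_mul, hτ, hva]
        linear_combination (τ ^ 2 + τ) * a ^ 3 * h)
      rcases this with h | h
      · rcases mul_eq_zero.mp h with h | h
        · exact hτ0 h
        · exact ha h
      · exact hτ1 (mul_right_cancel₀ ha (by rw [h, one_mul]))
    have hE : (c0 + c1 * v + c2 * v ^ 2 + c3 * v ^ 3) * (p12 + p23 * v ^ 2)
        + (c1 * v + c3 * v ^ 3) * w + (c2 * v ^ 2 + c3 * v ^ 3) * A = 0 := by
      have hvi : v⁻¹ * v = 1 := inv_mul_cancel₀ hv0
      have e1 : (c2 * v ^ 2 + c3 * v ^ 3) * A = (c2 + c3 * v) * (p01 + w * v ^ 2 + p23 * v ^ 4) := by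
        rw [hA]; field_simp
      have q0 : c0 * p12 + c2 * p01 = 0 := by
        have : c0 * p12 + c2 * p01 = c1 * (c0 * σ c1 + c2 * σ c3) := by
          rw [h12, h01]; grind
        rw [this, h02, mul_zero]
      have q1 : c1 * p12 + c1 * w + c3 * p01 = 0 := by
        have : c1 * p12 + c1 * w + c3 * p01 = c0 * (c1 * σ c0 + c3 * σ c2) := by
          rw [hwd, h12, h01, h03]; grind
        rw [this, h13, mul_zero]
      have q2 : c2 * p12 + c0 * p23 + c2 * w = 0 := by
        have : c2 * p12 + c0 * p23 + c2 * w = c3 * (c0 * σ c1 + c2 * σ c3) := by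
          rw [hwd, h12, h23, h03]; grind
        rw [this, h02, mul_zero]
      have q3 : c3 * p12 + c1 * p23 = 0 := by
        have : c3 * p12 + c1 * p23 = c2 * (c1 * σ c0 + c3 * σ c2) := by
          rw [h12, h23]; grind
        rw [this, h13, mul_zero]
      rw [e1]
      linear_combination q0 + v * q1 + v ^ 2 * q2 + v ^ 3 * q3
        + (c3 * w * v ^ 3 + c2 * p23 * v ^ 4 + c3 * p23 * v ^ 5) * h2
    obtain ⟨z, hz⟩ := AS_ex (2 * m) (by omega) hc r (by
      rw [T_two m σ hσ, hσr, add_assoc, T_add, T_tel, ← hσ, hσy, CharTwo.add_self_eq_zero,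
        add_zero, CharTwo.add_self_eq_zero])
    have hσz : σ z + z = T m r := by rw [← hz, T_tel, hσ]
    have hTT := T_sq_add m r
    rw [← hσ, hσr] at hTT
    have hTy : (T m r + y) * (T m r + y + 1) = 0 := by grind
    have hT1 : T m r + y + 1 = 0 := by
      rcases mul_eq_zero.mp hTy with h | h
      · exfalso
        have h5 : T m r = y := CharTwo.add_eq_zero.mp h
        have h6 : σ z = z + y := by
          rw [h5] at hσz; linear_combination hσz - z * h2
        have hEr : (c0 + c1 * v + c2 * v ^ 2 + c3 * v ^ 3) * r
            + (c1 * v + c3 * v ^ 3) * y + (c2 * v ^ 2 + c3 * v ^ 3) * y ^ 2 = 0 := by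
          apply (mul_eq_zero.mp (_ : _ * w = 0)).resolve_right hw
          linear_combination y * hE + (c0 + c1 * v + c2 * v ^ 2 + c3 * v ^ 3) * hrw
            + (c2 * v ^ 2 + c3 * v ^ 3) * y * hyw
        have := H a (a * z) ha (by
          simp only [P, map_mul, hva, h6]
          rw [← hz] at hEr
          linear_combination a ^ 3 * hEr + (c2 * v ^ 2 * z * y + c3 * v ^ 3 * z * y) * a ^ 3 * h2)
        have hzz : z = 0 ∨ z = 1 := by
          rcases this with h | h
          · left; simpa [ha] using h
          · right; exact mul_left_cancel₀ ha (by rw [h, mul_one])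
        apply hy0
        rcases hzz with h | h
        · rw [h, map_zero] at h6; linear_combination -h6
        · rw [h, map_one] at h6; linear_combination -h6
      · exact h
    have e2 : v ^ (2 : ℤ) = v ^ 2 := by norm_cast
    have e4 : v ^ (4 : ℤ) = v ^ 4 := by norm_cast
    have em2 : v ^ (-2 : ℤ) = v⁻¹ ^ 2 := by rw [zpow_neg, e2, inv_pow]
    rw [e2, e4, em2]
    have er : p01 * p12 / w ^ 2 * v⁻¹ ^ 2 + p12 ^ 2 / w ^ 2 + p23 * p03 / w ^ 2 * v ^ 2
        + p23 ^ 2 / w ^ 2 * v ^ 4 = r := by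
      rw [hr, hA]
      field_simp
      linear_combination (-(v^2))*hpl - v^4*p12*p23*h2 - (v^2*p12+v^4*p23)*hwd
    have ey : p01 / w * v⁻¹ ^ 2 + p23 / w * v ^ 2 = y + 1 := by
      rw [hy, hA]; field_simp; linear_combination (-(w * v ^ 2)) * h2
    rw [er, ey, ← hT1]; ring)
  have k2 : (p23 * p03 / w ^ 2) ^ 2 + p23 ^ 2 / w ^ 2 = (p23 * p12) ^ 2 / w ^ 4 := by
    field_simp
    grind
  rw [k2] at key
  rcases mul_eq_zero.mp key with h | h
  · rw [h] at hs2; rw [← hs2]; ring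
  · rcases div_eq_zero_iff.mp h with h | h
    · exact pow_eq_zero_iff (by norm_num) |>.mp h
    · exact absurd h (pow_ne_zero _ hw)

lemma par [CharP K 2] {c d c' d' a b : K} (hne : c * d' + c' * d ≠ 0) (h1 : c * b + a * d = 0)
    (h2 : c' * b + a * d' = 0) : a = 0 := by
  have h : a * (c * d' + c' * d) = 0 := by
    linear_combination c * h2 + c' * h1 - c * c' * b * (CharTwo.two_eq_zero : (2 : K) = 0)
  exact (mul_eq_zero.mp h).resolve_right hne

/-- classification after diagonalisation -/
lemma Cl [Fintype K] [CharP K 2] (m : ℕ) (hm : 4 ≤ m) (hc : Fintype.card K = 2 ^ (2 * m))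
    (σ : K →+* K) (hσ : ∀ x, σ x = x ^ 2 ^ m) (hss : ∀ x, σ (σ x) = x) (c0 c1 c2 c3 : K)
    (H : ∀ a x : K, a ≠ 0 → P σ c0 c1 c2 c3 x a = 0 → x = 0 ∨ x = a)
    (h02 : c0 * σ c1 + c2 * σ c3 = 0) :
    (c1 = 0 ∧ c2 = 0 ∧ c0 * σ c0 ≠ c3 * σ c3) ∨ (c0 = 0 ∧ c3 = 0 ∧ c1 * σ c1 ≠ c2 * σ c2) := by
  have h2 : (2 : K) = 0 := CharTwo.two_eq_zero
  have h13 : c1 * σ c0 + c3 * σ c2 = 0 := by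
    have := congrArg σ h02
    simp only [map_add, map_mul, hss, map_zero] at this
    linear_combination this
  have hw : (c0 * σ c0 + c3 * σ c3) + (c1 * σ c1 + c2 * σ c2) ≠ 0 := by
    intro hw
    exact A1 m hm hc σ hσ hss c0 c1 c2 c3 H (by linear_combination h02 + hw + h13)
  have hI := I1 m hm hc σ hσ hss c0 c1 c2 c3 H _ _ _ _ rfl rfl rfl rfl h02 hw
  have hpl : (c0 * σ c2 + c1 * σ c3) * (c2 * σ c0 + c3 * σ c1)
      + (c0 * σ c0 + c3 * σ c3) * (c1 * σ c1 + c2 * σ c2) = 0 := by grind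
  have hconj : σ (c2 * σ c0 + c3 * σ c1) = c0 * σ c2 + c1 * σ c3 := by
    simp only [map_add, map_mul, hss]; ring
  have h23 : c2 * σ c0 + c3 * σ c1 = 0 := by
    rcases mul_eq_zero.mp hI with h | h
    · exact h
    · rw [h, mul_zero, add_zero, ← hconj] at hpl
      rcases mul_eq_zero.mp hpl with h | h
      · exact (map_eq_zero σ).mp h
      · exact h
  have h01 : c0 * σ c2 + c1 * σ c3 = 0 := by rw [← hconj, h23, map_zero]
  rw [h23, mul_zero, zero_add] at hpl
  rcases mul_eq_zero.mp hpl with h | h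
  · right
    rw [h, zero_add] at hw
    refine ⟨?_, ?_, ?_⟩
    · exact par (c := c1) (d := σ c2) (c' := c2) (d' := σ c1) (b := σ c3) hw
        (by linear_combination h01) (by linear_combination h02)
    · exact par (c := c1) (d := σ c2) (c' := c2) (d' := σ c1) (b := σ c0) hw
        (by linear_combination h13) (by linear_combination h23)
    · intro h5; apply hw; rw [h5]; exact CharTwo.add_self_eq_zero _
  · left
    rw [h, add_zero] at hw
    refine ⟨?_, ?_, ?_⟩
    · exact par (c := c0) (d := σ c3) (c' := c3) (d' := σ c0) (b := σ c2) hw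
        (by linear_combination h01) (by linear_combination h13)
    · exact par (c := c0) (d := σ c3) (c' := c3) (d' := σ c0) (b := σ c1) hw
        (by linear_combination h02) (by linear_combination h23)
    · intro h5; apply hw; rw [h5]; exact CharTwo.add_self_eq_zero _

/-- the cubic form -/
def Q (σ : K →+* K) (c0 c1 c2 c3 x : K) : K :=
  c0 * x ^ 3 + c1 * (x ^ 2 * σ x) + c2 * (x * σ x ^ 2) + c3 * σ x ^ 3

lemma Q_polar [CharP K 2] (σ : K →+* K) (c0 c1 c2 c3 x a : K) :
    Q σ c0 c1 c2 c3 (x + a) + Q σ c0 c1 c2 c3 x + Q σ c0 c1 c2 c3 a = P σ c0 c1 c2 c3 x a := by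
  have h2 : (2 : K) = 0 := CharTwo.two_eq_zero
  simp only [Q, P, map_add]
  generalize σ x = y
  generalize σ a = b
  linear_combination (c0 * (x ^ 3 + a ^ 3 + x ^ 2 * a + x * a ^ 2)
    + c1 * (x ^ 2 * y + a ^ 2 * b + x * a * y + x * a * b)
    + c2 * (x * y ^ 2 + a * b ^ 2 + x * y * b + a * y * b)
    + c3 * (y ^ 3 + b ^ 3 + y ^ 2 * b + y * b ^ 2)) * h2

lemma Q_cov [CharP K 2] (σ : K →+* K) (hss : ∀ x, σ (σ x) = x) (c0 c1 c2 c3 v x : K) :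
    Q σ (c0 + c1 * v + c2 * v ^ 2 + c3 * v ^ 3)
      (c0 * σ v + c1 + c2 * σ v * v ^ 2 + c3 * v ^ 2)
      (c0 * σ v ^ 2 + c1 * σ v ^ 2 * v + c2 + c3 * v)
      (c0 * σ v ^ 3 + c1 * σ v ^ 2 + c2 * σ v + c3) x
    = Q σ c0 c1 c2 c3 (x + σ v * σ x) := by
  have h2 : (2 : K) = 0 := CharTwo.two_eq_zero
  simp only [Q, map_add, map_mul, hss]
  generalize σ x = y
  generalize σ v = d
  linear_combination (-(c0 * d + c1 * d * v + c2 * v + c3 * v ^ 2) * x ^ 2 * y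
    - (c0 * d ^ 2 + c1 * d + c2 * d * v + c3 * v) * x * y ^ 2) * h2

lemma M_inj (σ : K →+* K) (hss : ∀ x, σ (σ x) = x) (v x : K) (hv : v * σ v ≠ 1)
    (h : x + σ v * σ x = 0) : x = 0 := by
  have h1 := congrArg σ h
  simp only [map_add, map_mul, hss, map_zero] at h1
  have : x * (1 - v * σ v) = 0 := by linear_combination h - σ v * h1
  rcases mul_eq_zero.mp this with h | h
  · exact h
  · exact absurd (sub_eq_zero.mp h).symm hv

lemma p02_cov [CharP K 2] (c0 c1 c2 c3 d0 d1 d2 d3 v d : K)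
    (h : (c0 * d1 + c2 * d3) + (c0 * d0 + c3 * d3 + c1 * d1 + c2 * d2) * v
      + (c1 * d0 + c3 * d2) * v ^ 2 = 0) :
    (c0 + c1 * v + c2 * v ^ 2 + c3 * v ^ 3) * (d0 * v + d1 + d2 * v * d ^ 2 + d3 * d ^ 2)
    + (c0 * d ^ 2 + c1 * d ^ 2 * v + c2 + c3 * v) * (d0 * v ^ 3 + d1 * v ^ 2 + d2 * v + d3) = 0 := by
  have h2 : (2 : K) = 0 := CharTwo.two_eq_zero
  grind

lemma hilb [CharP K 2] (σ : K →+* K) (v : K) (hv : v * σ v = 1) :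
    ∃ x : K, x ≠ 0 ∧ σ x = v * x := by
  by_cases h1 : v = 1
  · exact ⟨1, one_ne_zero, by rw [h1]; simp⟩
  · refine ⟨1 + σ v, ?_, ?_⟩
    · intro h
      apply h1
      have : σ v = 1 := (CharTwo.add_eq_zero.mp h).symm
      rw [this, mul_one] at hv
      exact hv
    · have hv0 : v ≠ 0 := by rintro rfl; simp at hv
      have e : σ v = v⁻¹ := eq_inv_of_mul_eq_one_right hv
      rw [map_add, map_one, e, map_inv₀, e, inv_inv]
      field_simp
      ring

lemma diag [Fintype K] [CharP K 2] (m : ℕ) (hm : 4 ≤ m) (hc : Fintype.card K = 2 ^ (2 * m))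
    (σ : K →+* K) (hσ : ∀ x, σ x = x ^ 2 ^ m) (hss : ∀ x, σ (σ x) = x) (c0 c1 c2 c3 : K)
    (H : ∀ a x : K, a ≠ 0 → P σ c0 c1 c2 c3 x a = 0 → x = 0 ∨ x = a) :
    ∃ v : K, v * σ v ≠ 1 ∧
      (c0 * σ c1 + c2 * σ c3) + (c0 * σ c0 + c3 * σ c3 + c1 * σ c1 + c2 * σ c2) * v
      + (c1 * σ c0 + c3 * σ c2) * v ^ 2 = 0 := by
  have h2 : (2 : K) = 0 := CharTwo.two_eq_zero
  suffices h : ∃ v : K,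
      (c0 * σ c1 + c2 * σ c3) + (c0 * σ c0 + c3 * σ c3 + c1 * σ c1 + c2 * σ c2) * v
      + (c1 * σ c0 + c3 * σ c2) * v ^ 2 = 0 by
    obtain ⟨v, hv⟩ := h
    refine ⟨v, ?_, hv⟩
    intro h1
    obtain ⟨x, hx, hx1⟩ := hilb σ v h1
    refine A0 m hm hc σ hσ hss c0 c1 c2 c3 H x hx ?_
    rw [hx1]
    linear_combination x ^ 2 * hv
  obtain ⟨p, hp⟩ : ∃ p, p = c0 * σ c1 + c2 * σ c3 := ⟨_, rfl⟩
  obtain ⟨w, hw⟩ : ∃ w, w = c0 * σ c0 + c3 * σ c3 + c1 * σ c1 + c2 * σ c2 := ⟨_, rfl⟩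
  have hσp : σ p = c1 * σ c0 + c3 * σ c2 := by
    rw [hp]; simp only [map_add, map_mul, hss]; ring
  have hσw : σ w = w := by rw [hw]; simp only [map_add, map_mul, hss]; ring
  rw [← hp, ← hw, ← hσp]
  by_cases hp0 : p = 0
  · exact ⟨0, by rw [hp0]; simp⟩
  have hσp0 : σ p ≠ 0 := (map_ne_zero σ).mpr hp0
  by_cases hw0 : w = 0
  · obtain ⟨v, hv⟩ := sqrt_ex (p / σ p)
    refine ⟨v, ?_⟩
    rw [hw0, hv]
    field_simp
    linear_combination p * h2
  · obtain ⟨y, hy⟩ := AS_ex (2 * m) (by omega) hc (p * σ p / w ^ 2) (by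
      rw [T_two m σ hσ]
      simp only [map_div₀, map_mul, map_pow, hss, hσw]
      rw [mul_comm (σ p) p, CharTwo.add_self_eq_zero])
    refine ⟨w * y / σ p, ?_⟩
    have hy2 : (y ^ 2 + y) * w ^ 2 = p * σ p := by rw [hy]; field_simp
    field_simp
    linear_combination hy2 + p * σ p * h2

lemma exists_diag [Fintype K] [CharP K 2] (m : ℕ) (hm : 4 ≤ m)
    (hc : Fintype.card K = 2 ^ (2 * m))
    (σ : K →+* K) (hσ : ∀ x, σ x = x ^ 2 ^ m) (hss : ∀ x, σ (σ x) = x) (c0 c1 c2 c3 : K)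
    (H : ∀ a x : K, a ≠ 0 → P σ c0 c1 c2 c3 x a = 0 → x = 0 ∨ x = a) :
    ∃ v e0 e1 e2 e3 : K, v * σ v ≠ 1 ∧
      (∀ x, Q σ e0 e1 e2 e3 x = Q σ c0 c1 c2 c3 (x + σ v * σ x)) ∧
      ((e1 = 0 ∧ e2 = 0 ∧ e0 * σ e0 ≠ e3 * σ e3) ∨
        (e0 = 0 ∧ e3 = 0 ∧ e1 * σ e1 ≠ e2 * σ e2)) := by
  obtain ⟨v, hv, hB⟩ := diag m hm hc σ hσ hss c0 c1 c2 c3 H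
  refine ⟨v, _, _, _, _, hv, Q_cov σ hss c0 c1 c2 c3 v, ?_⟩
  refine Cl m hm hc σ hσ hss _ _ _ _ ?_ ?_
  · intro a x ha hP
    rw [← Q_polar, Q_cov σ hss, Q_cov σ hss, Q_cov σ hss] at hP
    have e : x + a + σ v * σ (x + a) = (x + σ v * σ x) + (a + σ v * σ a) := by
      rw [map_add]; ring
    rw [e, Q_polar] at hP
    rcases H _ _ (fun h => ha (M_inj σ hss v a hv h)) hP with h | h
    · left; exact M_inj σ hss v x hv h
    · right
      apply sub_eq_zero.mp
      apply M_inj σ hss v _ hv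
      rw [map_sub]; linear_combination h
  · simp only [map_add, map_mul, map_pow, hss]
    exact p02_cov _ _ _ _ _ _ _ _ _ _ hB

lemma aff_of_add [Finite K] (L : K → K) (hadd : ∀ x y, L (x + y) = L x + L y)
    (hinj : ∀ x, L x = 0 → x = 0) : IsAffinePerm L := by
  have h0 : L 0 = 0 := by have := hadd 0 0; rw [add_zero] at this; exact left_eq_add.mp this
  refine ⟨Finite.injective_iff_bijective.mp ?_, fun x y => by rw [h0, add_zero, hadd]⟩
  intro x y h
  apply sub_eq_zero.mp
  apply hinj
  have := hadd (x - y) y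
  rw [sub_add_cancel, h] at this
  exact right_eq_add.mp this

lemma conclude [Finite K] (f g L M : K → K) (hL : ∀ x y, L (x + y) = L x + L y)
    (hLi : ∀ x, L x = 0 → x = 0) (hM : ∀ x y, M (x + y) = M x + M y)
    (hMi : ∀ x, M x = 0 → x = 0) (h : ∀ x, f (M x) = L (g x)) : AffEquiv f g := by
  have hb := (aff_of_add L hL hLi).1
  obtain ⟨L', h1, h2⟩ := Function.bijective_iff_has_inverse.mp hb
  refine ⟨L', M, aff_of_add L' ?_ ?_, aff_of_add M hM hMi, fun x => by rw [h, h1]⟩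
  · intro x y
    apply hb.1
    rw [hL, h2, h2, h2]
  · intro x hx
    have := h2 x
    rw [hx] at this
    have h0 : L 0 = 0 := by have := hL 0 0; rw [add_zero] at this; exact left_eq_add.mp this
    rw [← this, h0]

lemma L_inj (σ : K →+* K) (hss : ∀ x, σ (σ x) = x) (c d z : K) (hn : c * σ c ≠ d * σ d)
    (h : c * z + d * σ z = 0) : z = 0 := by
  have h1 := congrArg σ h
  simp only [map_add, map_mul, hss, map_zero] at h1
  have : z * (c * σ c - d * σ d) = 0 := by linear_combination σ c * h - d * h1
  rcases mul_eq_zero.mp this with h | h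
  · exact h
  · exact absurd (sub_eq_zero.mp h) hn

lemma final [Fintype K] [CharP K 2] (m : ℕ) (hm : 4 ≤ m)
    (hc : Fintype.card K = 2 ^ (2 * m))
    (σ : K →+* K) (hσ : ∀ x, σ x = x ^ 2 ^ m) (hss : ∀ x, σ (σ x) = x) (c0 c1 c2 c3 : K)
    (f : K → K) (hf : ∀ x, f x = Q σ c0 c1 c2 c3 x) (hA : IsAPN f) :
    AffEquiv f (fun x : K => x ^ 3) ∨ AffEquiv f (fun x : K => x ^ (2 ^ (m - 1) + 1)) := by
  have H : ∀ a x : K, a ≠ 0 → P σ c0 c1 c2 c3 x a = 0 → x = 0 ∨ x = a := by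
    intro a x ha hP
    rw [← Q_polar, ← hf, ← hf, ← hf] at hP
    by_contra hne
    push Not at hne
    have f0 : f 0 = 0 := by rw [hf]; simp [Q]
    have h3 := hA a ha (f a)
    have hsub : ({0, a, x} : Set K) ⊆ {x : K | f (x + a) + f x = f a} := by
      rintro t (rfl | rfl | rfl)
      · simp [f0]
      · simp [CharTwo.add_self_eq_zero, f0]
      · exact CharTwo.add_eq_zero.mp hP
    have h4 := Set.ncard_le_ncard hsub (Set.toFinite _)
    have h5 : ({0, a, x} : Set K).ncard = 3 := Set.ncard_eq_three.mpr
      ⟨0, a, x, ha.symm, hne.1.symm, hne.2.symm, rfl⟩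
    omega
  obtain ⟨v, e0, e1, e2, e3, hv, hQ, hcase⟩ := exists_diag m hm hc σ hσ hss c0 c1 c2 c3 H
  have hMa : ∀ x y : K, (x + y) + σ v * σ (x + y) = (x + σ v * σ x) + (y + σ v * σ y) := by
    intro x y; rw [map_add]; ring
  rcases hcase with ⟨h1, h2, hn⟩ | ⟨h1, h2, hn⟩
  · left
    refine conclude f _ (fun z => e0 * z + e3 * σ z) (fun x => x + σ v * σ x) ?_ ?_ hMa ?_ ?_
    · intro x y; simp only [map_add]; ring
    · intro x hx; exact L_inj σ hss e0 e3 x hn hx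
    · intro x hx; exact M_inj σ hss v x hv hx
    · intro x
      rw [hf, ← hQ, h1, h2, map_pow, Q]; ring
  · right
    refine conclude f _ (fun z => e1 * z ^ 2 + e2 * σ (z ^ 2)) (fun x => x + σ v * σ x) ?_ ?_ hMa ?_ ?_
    · intro x y; simp only [CharTwo.add_sq, map_add]; ring
    · intro x hx
      exact pow_eq_zero_iff (by norm_num) |>.mp (L_inj σ hss e1 e2 _ hn hx)
    · intro x hx; exact M_inj σ hss v x hv hx
    · intro x
      have e : (x ^ (2 ^ (m - 1) + 1)) ^ 2 = x ^ 2 * σ x := by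
        obtain ⟨k, rfl⟩ : ∃ k, m = k + 1 := ⟨m - 1, by omega⟩
        rw [hσ, ← pow_mul, ← pow_add]
        congr 1
        rw [Nat.add_sub_cancel, pow_succ]; ring
      rw [hf, ← hQ, h1, h2, e, map_mul, map_pow, hss, Q]; ring

end Kim

/-- Kim-type APN functions on `𝔽_{q²}`, `q = 2^m`, `m ≥ 4`, are affine equivalent to one of the
two Gold functions `x ↦ x³` or `x ↦ x^{2^{m-1}+1}`. -/
theorem kim_type_APN_affine_equiv_Gold
    (m : ℕ) (hm : 4 ≤ m) (F : Type*) [Field F] [Fintype F]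
    (hcard : Fintype.card F = 2 ^ (2 * m))
    (a₁ a₂ a₃ : F) (f : F → F)
    (hf : ∀ x : F, f x = x ^ (3 * 2 ^ m) + a₁ * x ^ (2 * 2 ^ m + 1)
        + a₂ * x ^ (2 ^ m + 2) + a₃ * x ^ 3)
    (hAPN : IsAPN f) :
    AffEquiv f (fun x : F => x ^ 3) ∨ AffEquiv f (fun x : F => x ^ (2 ^ (m - 1) + 1)) := by
  classical
  haveI : Fact (Nat.Prime 2) := ⟨Nat.prime_two⟩
  haveI : CharP F 2 := by
    obtain ⟨p, hp⟩ := CharP.exists F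
    haveI := hp
    obtain ⟨n, hpp, hn⟩ := FiniteField.card F p
    have h1 : p ∣ 2 ^ (2 * m) := by
      rw [← hcard, hn]; exact dvd_pow_self p n.ne_zero
    have h2 : p = 2 := (Nat.prime_dvd_prime_iff_eq hpp Nat.prime_two).mp (hpp.dvd_of_dvd_pow h1)
    rw [← h2]; exact hp
  have hσ : ∀ x : F, iterateFrobenius F 2 m x = x ^ 2 ^ m := fun x => iterateFrobenius_def 2 m x
  have hss : ∀ x : F, iterateFrobenius F 2 m (iterateFrobenius F 2 m x) = x := by
    intro x
    rw [hσ, hσ, ← pow_mul, ← pow_add, ← two_mul, ← hcard, FiniteField.pow_card]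
  refine Kim.final m hm hcard (iterateFrobenius F 2 m) hσ hss a₃ a₂ a₁ 1 f ?_ hAPN
  intro x
  rw [hf, Kim.Q, hσ]
  ring
end

section
/- Let m ≥ 4 be an integer and q = 2^m. Let f : F_{q²} → F_{q²} be given by f(x) = x^{3q} + a₁x^{2q+1} + a₂x^{q+2} + a₃x³ where a₁, a₂, a₃ ∈ F_q (the subfield of order 2^m). If f is APN, then f is affine equivalent to G₁(x) = x³ or f is affine equivalent to G₂(x) = x^{2^{m-1}+1}. -/
namespace KimAux

section chi
set_option linter.unusedSectionVars false
variable {K : Type*} [Field K] [Fintype K] [CharP K 2]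

/-- The Artin-Schreier map. -/
def wp (K : Type*) [Field K] [CharP K 2] : K →+ K where
  toFun u := u ^ 2 + u
  map_zero' := by simp
  map_add' x y := by grind

theorem mem_wp (x : K) : x ∈ (wp K).range ↔ ∃ u : K, u ^ 2 + u = x := Iff.rfl

theorem wp_index : (wp K).range.index = 2 := by
  have h1 : Nat.card (wp K).ker = 2 := by
    have : ((wp K).ker : Set K) = {0, 1} := by
      ext x
      simp only [SetLike.mem_coe, AddMonoidHom.mem_ker, Set.mem_insert_iff, Set.mem_singleton_iff]
      change x ^ 2 + x = 0 ↔ _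
      constructor
      · intro h
        have : x * (x + 1) = 0 := by linear_combination h
        rcases mul_eq_zero.1 this with h | h
        · exact Or.inl h
        · right; grind
      · rintro (rfl | rfl) <;> grind
    have h2 := Set.ncard_pair (zero_ne_one (α := K))
    rw [← this] at h2
    exact h2
  have h2 := AddSubgroup.index_ker (wp K)
  have h3 := AddSubgroup.card_mul_index (wp K).ker
  have h4 := AddSubgroup.card_mul_index (wp K).range
  rw [h1, h2] at h3
  have h5 : 0 < Nat.card (wp K).range := Nat.card_pos
  rw [← h3, mul_comm] at h4
  exact Nat.eq_of_mul_eq_mul_right h5 h4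

open Classical in
/-- The quadratic additive character of `K`. -/
noncomputable def chi (x : K) : ℤ := if x ∈ (wp K).range then 1 else -1

theorem chi_add (x y : K) : chi (x + y) = chi x * chi y := by
  have := AddSubgroup.add_mem_iff_of_index_two (wp_index (K := K)) (a := x) (b := y)
  unfold chi
  by_cases h1 : x ∈ (wp K).range <;> by_cases h2 : y ∈ (wp K).range <;> simp_all

theorem chi_zero : chi (0 : K) = 1 := by simp [chi, zero_mem]

theorem chi_or (x : K) : chi x = 1 ∨ chi x = -1 := by
  unfold chi; split_ifs <;> simp

theorem chi_eq_one (x : K) : chi x = 1 ↔ ∃ u : K, u ^ 2 + u = x := by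
  rw [← mem_wp]; unfold chi; split_ifs <;> simp_all

theorem chi_mul_self (x : K) : chi x * chi x = 1 := by
  rcases chi_or x with h | h <;> simp [h]

theorem chi_sq (x : K) : chi (x ^ 2) = chi x := by
  have h : chi (x ^ 2 + x) = 1 := (chi_eq_one _).2 ⟨x, rfl⟩
  rw [chi_add] at h
  have := chi_mul_self x
  rcases chi_or x with h1 | h1 <;> rw [h1] at h ⊢ <;> linarith

theorem sum_chi {d : K} (hd : chi d = -1) : ∑ v : K, chi v = 0 := by
  have h : ∑ v : K, chi (v + d) = ∑ v : K, chi v :=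
    Equiv.sum_comp (Equiv.addRight d) (fun v => chi v)
  simp only [chi_add, hd, ← Finset.sum_mul] at h
  linarith

theorem sum_chi_mul {d : K} (hd : chi d = -1) {c : K} (hc : c ≠ 0) :
    ∑ v : K, chi (c * v) = 0 := by
  rw [← sum_chi hd]
  exact Equiv.sum_comp (Equiv.mulLeft₀ c hc) (fun v => chi v)

theorem sum_chi_inv {d : K} (hd : chi d = -1) : ∑ v : K, chi (v⁻¹) = 0 := by
  rw [← sum_chi hd]
  exact Equiv.sum_comp (Equiv.ofBijective _ (inv_involutive (G := K)).bijective) (fun v => chi v)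

/-- Kloosterman sum. -/
noncomputable def kl (c : K) : ℤ := ∑ v : K, chi (v⁻¹) * chi (c * v)

theorem kl_sq (c : K) : kl (c ^ 2) = kl c := by
  have hb : Function.Bijective (fun v : K => v ^ 2) := by
    have : Function.Injective (fun v : K => v ^ 2) := by
      intro x y h
      have h : x ^ 2 = y ^ 2 := h
      have : (x + y) ^ 2 = 0 := by grind
      have := pow_eq_zero_iff (two_ne_zero) |>.1 this
      grind
    exact Finite.injective_iff_bijective.1 this
  unfold kl
  rw [← Equiv.sum_comp (Equiv.ofBijective _ hb)]
  refine Finset.sum_congr rfl fun v _ => ?_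
  simp only [Equiv.ofBijective_apply]
  rw [← inv_pow, chi_sq, ← mul_pow, chi_sq]

theorem kl_moment {d : K} (hd : chi d = -1) :
    ∑ c : K, kl c ^ 2 = (Fintype.card K : ℤ) ^ 2 := by
  classical
  have h1 : ∀ c : K, kl c ^ 2 =
      ∑ v : K, ∑ w : K, chi (v⁻¹) * chi (w⁻¹) * chi ((v + w) * c) := by
    intro c
    rw [sq, kl, Finset.sum_mul_sum]
    refine Finset.sum_congr rfl fun v _ => Finset.sum_congr rfl fun w _ => ?_
    rw [add_mul, chi_add, mul_comm c v, mul_comm c w]; ring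
  simp only [h1]
  rw [Finset.sum_comm]
  have h2 : ∀ v : K, ∑ c : K, ∑ w : K, chi (v⁻¹) * chi (w⁻¹) * chi ((v + w) * c)
      = (Fintype.card K : ℤ) := by
    intro v
    rw [Finset.sum_comm, Finset.sum_eq_single v]
    · have : v + v = 0 := by grind
      simp [this, chi_zero, chi_mul_self]
    · intro w _ hw
      rw [← Finset.mul_sum, sum_chi_mul hd, mul_zero]
      intro h
      apply hw; grind
    · simp
  simp only [h2]
  simp [sq]

theorem exists_v (hq : 16 ≤ Fintype.card K) {b d : K} (hb0 : b ≠ 0) (hb1 : b ≠ 1)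
    (hd : chi d = -1) :
    ∃ v : K, v ≠ 0 ∧ v⁻¹ ≠ b ^ 2 + b ∧ chi (v⁻¹) = - chi b ∧ chi ((b ^ 4 + b ^ 3) * v) = -1 := by
  classical
  set c := b ^ 4 + b ^ 3 with hc
  have hb2 : b + 1 ≠ 0 := by intro h; apply hb1; grind
  have hc0 : c ≠ 0 := by
    have : c = b ^ 3 * (b + 1) := by rw [hc]; ring
    rw [this]; positivity
  have hbb : b ^ 2 + b ≠ 0 := by
    have : b ^ 2 + b = b * (b + 1) := by ring
    rw [this]; positivity
  set N : Finset K := Finset.univ.filter (fun v => chi (v⁻¹) = - chi b ∧ chi (c * v) = -1) with hN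
  have hcount : 4 * (N.card : ℤ) = Fintype.card K + chi b * kl c := by
    have e1 : ∀ v : K, (1 - chi b * chi (v⁻¹)) * (1 - chi (c * v)) =
        if chi (v⁻¹) = - chi b ∧ chi (c * v) = -1 then 4 else 0 := by
      intro v
      rcases chi_or b with h1 | h1 <;> rcases chi_or (v⁻¹) with h2 | h2 <;>
        rcases chi_or (c * v) with h3 | h3 <;> simp [h1, h2, h3]
    have e2 : ∑ v : K, (1 - chi b * chi (v⁻¹)) * (1 - chi (c * v)) = 4 * (N.card : ℤ) := by
      simp only [e1]
      rw [← Finset.sum_filter, Finset.sum_const, ← hN]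
      simp [mul_comm]
    rw [← e2]
    have e3 : ∀ v : K, (1 - chi b * chi (v⁻¹)) * (1 - chi (c * v)) =
       1 - chi b * chi (v⁻¹) - chi (c * v) + chi b * (chi (v⁻¹) * chi (c * v)) := by
      intro v; ring
    simp only [e3]
    rw [Finset.sum_add_distrib, Finset.sum_sub_distrib, Finset.sum_sub_distrib,
      ← Finset.mul_sum, ← Finset.mul_sum, sum_chi_inv hd, sum_chi_mul hd hc0]
    simp [kl]
  have h0 : (0 : K) ∉ N := by simp [hN, chi_zero]
  have hmom := kl_moment hd
  have hkl0 : kl (0 : K) = 0 := by simp [kl, chi_zero, sum_chi_inv hd]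
  suffices h : ∃ v ∈ N, v⁻¹ ≠ b ^ 2 + b by
    obtain ⟨v, hv, hv2⟩ := h
    refine ⟨v, ?_, hv2, ?_⟩
    · rintro rfl; exact h0 hv
    · simpa [hN] using hv
  have hle : ∀ s : Finset K, ∑ x ∈ s, kl x ^ 2 ≤ (Fintype.card K : ℤ) ^ 2 := by
    intro s
    rw [← hmom]
    exact Finset.sum_le_sum_of_subset_of_nonneg (Finset.subset_univ _) (fun _ _ _ => sq_nonneg _)
  have hbq : chi (b ^ 2 + b) = 1 := (chi_eq_one _).2 ⟨b, rfl⟩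
  have hqz : (16 : ℤ) ≤ Fintype.card K := by exact_mod_cast hq
  rcases chi_or b with h1 | h1
  · -- one element suffices
    have hne : N.Nonempty := by
      rw [Finset.nonempty_iff_ne_empty]
      intro hemp
      rw [hemp, h1] at hcount
      simp only [Finset.card_empty, Nat.cast_zero, mul_zero, one_mul] at hcount
      -- kl c = -q and so kl c ^2 = q^2, everything else 0
      have hcc : ∑ x ∈ (Finset.univ : Finset K), kl x = ∑ x ∈ {c}, kl x := by
        symm
        apply Finset.sum_subset (Finset.subset_univ _)
        intro x _ hx
        have hx : x ≠ c := by simpa using hx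
        have := hle {x, c}
        rw [Finset.sum_pair hx] at this
        have h3 : kl c = - Fintype.card K := by linarith
        rw [h3] at this
        have : kl x ^ 2 ≤ 0 := by linarith [neg_sq (Fintype.card K : ℤ)]
        have : kl x ^ 2 = 0 := le_antisymm this (sq_nonneg _)
        exact pow_eq_zero_iff (two_ne_zero) |>.1 this
      rw [Finset.sum_singleton] at hcc
      have htot : ∑ x : K, kl x = Fintype.card K := by
        unfold kl
        rw [Finset.sum_comm, Finset.sum_eq_single 0]
        · simp [chi_zero]
        · intro v _ hv
          rw [← Finset.mul_sum]
          simp only [mul_comm _ v]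
          rw [sum_chi_mul hd hv, mul_zero]
        · simp
      rw [htot] at hcc
      linarith
    obtain ⟨v, hv⟩ := hne
    refine ⟨v, hv, ?_⟩
    intro h
    have : chi (v⁻¹) = - chi b := by
      have := hv; simp only [hN, Finset.mem_filter] at this; exact this.2.1
    rw [h, hbq, h1] at this
    norm_num at this
  · suffices h : 1 < N.card by
      obtain ⟨x, hx, y, hy, hxy⟩ := Finset.one_lt_card.1 h
      by_cases hx2 : x⁻¹ = b ^ 2 + b
      · refine ⟨y, hy, fun hy2 => hxy ?_⟩
        exact inv_injective (hx2.trans hy2.symm)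
      · exact ⟨x, hx, hx2⟩
    by_cases hc1 : c = 1
    · rw [Finset.one_lt_card]
      have hmem : ∀ v : K, v ∈ N ↔ chi (v⁻¹) = 1 ∧ chi v = -1 := by
        intro v; simp [hN, h1, hc1]
      have hv0 : (b ^ 2 + b)⁻¹ ∈ N := by
        rw [hmem, inv_inv]
        refine ⟨hbq, ?_⟩
        have : (b ^ 2 + b)⁻¹ = b ^ 2 := by
          rw [inv_eq_iff_eq_inv, ← mul_eq_one_iff_eq_inv₀ (by positivity), ← hc1, hc]; ring
        rw [this, chi_sq, h1]
      refine ⟨_, hv0, ((b ^ 2 + b)⁻¹) ^ 2, ?_, ?_⟩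
      · rw [hmem] at hv0 ⊢
        rw [← inv_pow, chi_sq, chi_sq]; exact hv0
      · intro h
        have h5 : (b ^ 2 + b)⁻¹ = 1 := by
          have h6 : (b ^ 2 + b)⁻¹ ≠ 0 := inv_ne_zero hbb
          have : (b ^ 2 + b)⁻¹ * ((b ^ 2 + b)⁻¹ - 1) = 0 := by linear_combination -h
          rcases mul_eq_zero.1 this with h | h
          · exact absurd h h6
          · exact sub_eq_zero.1 h
        rw [inv_eq_one] at h5
        rw [hc] at hc1
        apply hb0
        grind
    · have hcc : c ≠ c ^ 2 := by
        intro h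
        have : c * (c - 1) = 0 := by linear_combination -h
        rcases mul_eq_zero.1 this with h | h
        · exact hc0 h
        · exact hc1 (sub_eq_zero.1 h)
      have h3 := hle {c, c ^ 2}
      rw [Finset.sum_pair hcc, kl_sq] at h3
      rw [h1] at hcount
      by_contra hlt
      have hlt : (N.card : ℤ) ≤ 1 := by exact_mod_cast not_lt.1 hlt
      have h4 : (Fintype.card K : ℤ) - 4 ≤ kl c := by linarith
      nlinarith

theorem exists_triple (hq : 16 ≤ Fintype.card K) {b d : K} (hb0 : b ≠ 0) (hb1 : b ≠ 1)
    (hd : ¬ ∃ u : K, u ^ 2 + u = d) :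
    ∃ x y z : K, x ≠ y ∧ x ≠ z ∧ y ≠ z ∧ x * y + x * z + y * z = x + y + z + d + 1 ∧
      x * y * z = (x + y + z) * d + d + b ^ 2 := by
  have hd : chi d = -1 := by
    rcases chi_or d with h | h
    · exact absurd ((chi_eq_one d).1 h) hd
    · exact h
  obtain ⟨v, hv0, hv1, hv2, hv3⟩ := exists_v hq hb0 hb1 hd
  obtain ⟨r, hr⟩ : ∃ r : K, r ^ 2 + r = v⁻¹ + b ^ 2 + d := by
    rw [← chi_eq_one, chi_add, chi_add, chi_sq, hv2, hd]
    linarith [chi_mul_self b]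
  obtain ⟨u, hu⟩ : ∃ u : K, u ^ 2 + u = d + (b ^ 4 + b ^ 3) * v := by
    rw [← chi_eq_one, chi_add, hd, hv3]; norm_num
  have hS : r ^ 2 + r + d ≠ 0 := by
    intro h
    have : chi d = 1 := (chi_eq_one d).2 ⟨r, by grind⟩
    rw [hd] at this; norm_num at this
  set S := r ^ 2 + r + d with hSd
  set g := b ^ 2 * S⁻¹ with hg
  have hgS : g * S = b ^ 2 := by rw [hg]; field_simp
  have hSv : S = v⁻¹ + b ^ 2 := by grind
  have hE : (S + b ^ 2) * v = 1 := by
    have : S + b ^ 2 = v⁻¹ := by grind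
    rw [this]; exact inv_mul_cancel₀ hv0
  set w := b ^ 2 * (r + 1 + b) * v with hw
  have hge : (1 + g) * S = v⁻¹ := by rw [hSv] at *; grind
  have he0 : 1 + g ≠ 0 := by
    intro h; rw [h, zero_mul] at hge; exact inv_ne_zero hv0 hge.symm
  have hn : (1 + g) ^ 2 * ((u + w) ^ 2 + (u + w)) = d + g * (r + 1) := by
    have h1 : S ^ 2 * ((1 + g) ^ 2 * ((u + w) ^ 2 + (u + w))) = S ^ 2 * (d + g * (r + 1)) := by
      have k1 : (1 + g) * S = S + b ^ 2 := by rw [add_mul, hgS, one_mul]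
      have k2 : (S + b ^ 2) * w = b ^ 2 * (r + 1 + b) := by
        rw [hw]; linear_combination (b ^ 2 * (r + 1 + b)) * hE
      have k3 : (S + b ^ 2) ^ 2 * (u ^ 2 + u) =
          (S + b ^ 2) ^ 2 * d + (b ^ 4 + b ^ 3) * (S + b ^ 2) := by
        rw [hu]; linear_combination ((b ^ 4 + b ^ 3) * (S + b ^ 2)) * hE
      have k4 : S ^ 2 * ((1 + g) ^ 2 * ((u + w) ^ 2 + (u + w))) =
          (S + b ^ 2) ^ 2 * (u ^ 2 + u) + ((S + b ^ 2) * w) ^ 2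
            + ((S + b ^ 2) * w) * (S + b ^ 2) := by
        rw [← k1]; grind
      have k5 : S ^ 2 * (d + g * (r + 1)) = S ^ 2 * d + S * b ^ 2 * (r + 1) := by
        rw [← hgS]; ring
      rw [k4, k5, k3, k2]
      have k6 : d = S + r ^ 2 + r := by rw [hSd]; grind
      clear_value S
      subst k6
      clear k4 k5 k3 k2 k1 hE hSv hge hgS hu hr
      grind
    exact mul_left_cancel₀ (pow_ne_zero 2 hS) h1
  have hSb : S ≠ b := by
    intro h; apply hv1; grind
  have hSg : S + g ≠ 0 := by
    intro h
    have h2 : (S + b) ^ 2 = 0 := by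
      have : S * (S + g) = 0 := by rw [h, mul_zero]
      grind
    have h2 := pow_eq_zero_iff (two_ne_zero) |>.1 h2
    apply hSb; grind
  set z1 := (1 + g) * (u + w) with hz1
  set z2 := (1 + g) * (u + w + 1) with hz2
  have hs : z1 + z2 = 1 + g := by grind
  have hp : z1 * z2 = d + g * (r + 1) := by rw [← hn, hz1, hz2]; ring
  have hquad : ∀ z, z ^ 2 + (1 + g) * z + (d + g * (r + 1)) = (z + z1) * (z + z2) := by
    intro z; rw [← hs, ← hp]; ring
  have hrr : (r + z1) * (r + z2) ≠ 0 := by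
    rw [← hquad]
    intro h; apply hSg; rw [← h, hSd]; grind
  refine ⟨r, z1, z2, ?_, ?_, ?_, ?_, ?_⟩
  · intro h; apply hrr; rw [← h]; grind
  · intro h; apply hrr; rw [← h]; grind
  · intro h; apply he0; rw [← hs, h]; grind
  · have : r * z1 + r * z2 + z1 * z2 = r * (z1 + z2) + z1 * z2 := by ring
    rw [this, add_assoc r z1 z2, hs, hp]; grind
  · rw [add_assoc r z1 z2, mul_assoc, hs, hp, ← hgS, hSd]; grind

end chi

theorem apn_ne {F : Type*} [Field F] [Finite F] [CharP F 2] {f : F → F} (hf : IsAPN f)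
    (h0 : f 0 = 0) {a x : F} (ha : a ≠ 0) (hx : x ≠ 0) (hxa : x ≠ a)
    (h : f x + f a + f (x + a) = 0) : False := by
  have h1 := hf a ha (f a)
  have h2 : ({0, a, x} : Set F) ⊆ {x : F | f (x + a) + f x = f a} := by
    intro y hy
    simp only [Set.mem_insert_iff, Set.mem_singleton_iff] at hy
    simp only [Set.mem_ofPred_eq]
    rcases hy with rfl | rfl | rfl
    · simp [h0]
    · have : y + y = 0 := by grind
      simp [h0, this]
    · grind
  have h3 := Set.ncard_le_ncard h2 (Set.toFinite _)
  have h4 : ({0, a, x} : Set F).ncard = 3 :=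
    Set.ncard_eq_three.2 ⟨0, a, x, ha.symm, hx.symm, hxa.symm, rfl⟩
  omega

section main
set_option linter.unusedSectionVars false
variable {F : Type*} [Field F] [Fintype F] [CharP F 2]

theorem setup (m : ℕ) (hcard : Fintype.card F = 2 ^ (2 * m)) (hm : 4 ≤ m) :
    ∃ σ : F →+* F, (∀ x, σ x = x ^ (2 ^ m)) ∧ (∀ x, σ (σ x) = x) ∧
      16 ≤ Nat.card (σ.eqLocusField (RingHom.id F)) ∧ ∃ ω, σ ω = ω + 1 := by
  have hσ : ∀ x, iterateFrobenius F 2 m x = x ^ (2 ^ m) := fun x => iterateFrobenius_def 2 m x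
  refine ⟨iterateFrobenius F 2 m, hσ, ?_⟩
  have hσσ : ∀ x, iterateFrobenius F 2 m (iterateFrobenius F 2 m x) = x := by
    intro x
    rw [hσ, hσ, ← pow_mul, ← pow_add, ← two_mul, ← hcard, FiniteField.pow_card]
  refine ⟨hσσ, ?_⟩
  set σ := iterateFrobenius F 2 m
  set K := σ.eqLocusField (RingHom.id F)
  have hK : ∀ x, x ∈ K ↔ σ x = x := fun x => Iff.rfl
  let T : F →+ F := σ.toAddMonoidHom + AddMonoidHom.id F
  have hT : ∀ x, T x = σ x + x := fun x => rfl
  have hker : T.ker = K.toAddSubgroup := by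
    ext x
    rw [AddMonoidHom.mem_ker, hT]
    change _ ↔ x ∈ K
    rw [hK]; grind
  have hran : T.range ≤ K.toAddSubgroup := by
    rintro _ ⟨x, rfl⟩
    change _ ∈ K
    rw [hK, hT, map_add, hσσ, add_comm]
  have hKq : Nat.card K ≤ 2 ^ m := by
    classical
    have h2 : (1 : ℕ) < 2 ^ m := Nat.one_lt_two_pow (by omega)
    have hp : (Polynomial.X ^ (2 ^ m) - Polynomial.X : Polynomial F) ≠ 0 :=
      FiniteField.X_pow_card_sub_X_ne_zero F h2
    have hsub : (K : Set F) ⊆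
        ((Polynomial.X ^ (2 ^ m) - Polynomial.X : Polynomial F).roots.toFinset : Set F) := by
      intro x hx
      have hx : σ x = x := hx
      rw [hσ] at hx
      simp [hp, hx]
    have h3 := Set.ncard_le_ncard hsub (Set.toFinite _)
    rw [Set.ncard_coe_finset] at h3
    refine le_trans h3 ((Multiset.toFinset_card_le _).trans ((Polynomial.card_roots' _).trans ?_))
    rw [FiniteField.X_pow_card_sub_X_natDegree_eq F h2]
  have h1 := AddSubgroup.card_mul_index T.ker
  rw [AddSubgroup.index_ker, hker, Nat.card_eq_fintype_card (α := F), hcard] at h1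
  have hr : Nat.card T.range ≤ Nat.card K := Nat.card_mono (Set.toFinite _) hran
  change Nat.card K * Nat.card T.range = _ at h1
  have h2q : 2 ^ (2 * m) = 2 ^ m * 2 ^ m := by rw [two_mul, pow_add]
  have hq : 2 ^ m ≤ Nat.card T.range := by
    by_contra hlt
    push Not at hlt
    have : Nat.card K * Nat.card T.range < 2 ^ m * 2 ^ m :=
      Nat.mul_lt_mul_of_le_of_lt hKq hlt (by positivity)
    omega
  have h16 : 16 ≤ 2 ^ m := by
    calc 16 = 2 ^ 4 := by norm_num
      _ ≤ 2 ^ m := Nat.pow_le_pow_right (by norm_num) hm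
  refine ⟨by omega, ?_⟩
  have heq : T.range = K.toAddSubgroup := by
    apply SetLike.coe_injective
    apply Set.eq_of_subset_of_ncard_le hran
    change Nat.card K ≤ Nat.card T.range
    omega
  have : (1 : F) ∈ T.range := by
    rw [heq]
    change (1 : F) ∈ K
    exact one_mem K
  obtain ⟨w, hw⟩ := this
  rw [hT] at hw
  exact ⟨w, by grind⟩

theorem affine_inv {σ : F →+* F} (hσσ : ∀ x, σ (σ x) = x) {α β : F} (hα : σ α = α)
    (hβ : σ β = β) (hne : α + β ≠ 0) :
    ∃ M : F → F, Function.Bijective M ∧ (∀ x y, M (x + y) = M x + M y) ∧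
      ∀ y, M (α * y + β * σ y) = y := by
  have h2 : (α + β) ^ 2 ≠ 0 := pow_ne_zero 2 hne
  have hM : ∀ y, ((α + β) ^ 2)⁻¹ * (α * (α * y + β * σ y) + β * σ (α * y + β * σ y)) = y := by
    intro y
    rw [inv_mul_eq_iff_eq_mul₀ h2]
    simp only [map_add, map_mul, hα, hβ, hσσ]
    grind
  refine ⟨fun y => ((α + β) ^ 2)⁻¹ * (α * y + β * σ y), ?_, ?_, hM⟩
  · have : Function.Surjective (fun y => ((α + β) ^ 2)⁻¹ * (α * y + β * σ y)) :=
      fun y => ⟨_, hM y⟩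
    exact ⟨Finite.injective_iff_surjective.2 this, this⟩
  · intro x y
    simp only [map_add]; ring

theorem affine_of_add {M : F → F} (h1 : Function.Bijective M)
    (h2 : ∀ x y, M (x + y) = M x + M y) : IsAffinePerm M := by
  refine ⟨h1, fun x y => ?_⟩
  have : M 0 = 0 := by
    have := h2 0 0
    rw [add_zero] at this
    simpa using this
  rw [h2, this, add_zero]

theorem L_affine {σ : F →+* F} (hσσ : ∀ x, σ (σ x) = x) {ε : F} (hε : σ ε = ε) :
    Function.Injective (fun x => x + ε * (x + σ x)) ∧
      IsAffinePerm (fun x => x + ε * (x + σ x)) := by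
  have hi : Function.Injective (fun x => x + ε * (x + σ x)) := by
    have : Function.Involutive (fun x => x + ε * (x + σ x)) := by
      intro x
      simp only [map_add, map_mul, hσσ, hε]
      grind
    exact this.injective
  refine ⟨hi, affine_of_add (Finite.injective_iff_bijective.1 hi) ?_⟩
  intro x y
  simp only [map_add]; ring

theorem triple_identity {σ : F →+* F} {ω d D P T B x y z : F} (hω : σ ω = ω + 1)
    (hd : ω ^ 2 + ω = d) (hx : σ x = x) (hy : σ y = y) (hz : σ z = z)
    (hB : P + T = D * B)
    (h2 : x * y + x * z + y * z = x + y + z + d + 1)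
    (h3 : x * y * z = (x + y + z) * d + d + B) (g : F → F)
    (hg : ∀ X, g X = D * X ^ 3 + P * (X ^ 2 * (X + σ X) + X * (X + σ X) ^ 2)
      + T * (X + σ X) ^ 3) :
    g ((y + z) * (x + ω)) + g ((x + z) * (y + ω)) + g ((y + z) * (x + ω) + (x + z) * (y + ω))
      = 0 := by
  have hc : ∀ c r : F, σ c = c → σ r = r → g (c * (r + ω)) =
      c ^ 3 * (D * (r ^ 3 + r ^ 2 * ω + r * ω ^ 2 + ω ^ 3) + P * (r ^ 2 + r + d) + T) := by
    intro c r hc hr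
    have : σ (c * (r + ω)) = c * (r + ω) + c := by
      rw [map_mul, map_add, hc, hr, hω]; ring
    rw [hg, this, ← hd]
    grind
  have h4 : (y + z) * (x + ω) + (x + z) * (y + ω) = (x + y) * (z + ω) := by grind
  rw [h4, hc _ _ (by rw [map_add, hy, hz]) hx, hc _ _ (by rw [map_add, hx, hz]) hy,
    hc _ _ (by rw [map_add, hx, hy]) hz]
  have key : ∀ p0 p1 p2 p3 : F,
      (y + z) ^ 3 * (p0 + p1 * x + p2 * x ^ 2 + p3 * x ^ 3)
      + (x + z) ^ 3 * (p0 + p1 * y + p2 * y ^ 2 + p3 * y ^ 3)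
      + (x + y) ^ 3 * (p0 + p1 * z + p2 * z ^ 2 + p3 * z ^ 3)
      = (x + y) * (x + z) * (y + z) * (p0 + p1 * (x + y + z) + p2 * (x * y + x * z + y * z)
        + p3 * (x * y * z)) := by
    intro p0 p1 p2 p3
    grind
  have := key (D * ω ^ 3 + P * d + T) (D * ω ^ 2 + P) (D * ω + P) D
  rw [h2, h3] at this
  have h5 : D * ω ^ 3 + P * d + T + (D * ω ^ 2 + P) * (x + y + z)
      + (D * ω + P) * (x + y + z + d + 1) + D * ((x + y + z) * d + d + B) = 0 := by
    rw [← hd]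
    grind
  rw [h5, mul_zero] at this
  rw [← this]
  ring

end main

section lift
set_option linter.unusedSectionVars false
variable {F : Type*} [Field F] [Fintype F] [CharP F 2]

theorem lift_facts {σ : F →+* F} (h16 : 16 ≤ Nat.card (σ.eqLocusField (RingHom.id F)))
    {ω : F} (hω : σ ω = ω + 1) :
    (∀ y, σ y = y → (∃ u, σ u = u ∧ u ^ 2 + u = y) ∨
      ∃ u, σ u = u ∧ u ^ 2 + u = y + (ω ^ 2 + ω)) ∧
    (∃ c, σ c = c ∧ c ≠ 0 ∧ c ≠ 1) ∧
    (∀ B, σ B = B → B ≠ 0 → B ≠ 1 → ∃ x y z : F, σ x = x ∧ σ y = y ∧ σ z = z ∧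
      x ≠ y ∧ x ≠ z ∧ y ≠ z ∧
      x * y + x * z + y * z = x + y + z + (ω ^ 2 + ω) + 1 ∧
      x * y * z = (x + y + z) * (ω ^ 2 + ω) + (ω ^ 2 + ω) + B) := by
  classical
  set K := σ.eqLocusField (RingHom.id F)
  have hK : ∀ x : K, σ x = x := fun x => x.2
  have : Fintype K := Fintype.ofFinite K
  have : CharP K 2 := RingHom.charP K.subtype K.subtype.injective 2
  rw [Nat.card_eq_fintype_card] at h16
  have hδ : σ (ω ^ 2 + ω) = ω ^ 2 + ω := by
    rw [map_add, map_pow, hω]; grind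
  let δ : K := ⟨ω ^ 2 + ω, hδ⟩
  have hδK : ¬ ∃ u : K, u ^ 2 + u = δ := by
    rintro ⟨u, hu⟩
    have hu : (u : F) ^ 2 + u = ω ^ 2 + ω := congrArg Subtype.val hu
    have h1 := hK u
    have : ((u : F) + ω) * (u + ω + 1) = 0 := by grind
    rcases mul_eq_zero.1 this with h | h
    · have : (u : F) = ω := by grind
      rw [this, hω] at h1; grind
    · have : (u : F) = ω + 1 := by grind
      rw [this, map_add, hω, map_one] at h1; grind
  refine ⟨?_, ?_, ?_⟩
  · intro y hy
    let y' : K := ⟨y, hy⟩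
    by_cases h : ∃ u : K, u ^ 2 + u = y'
    · obtain ⟨u, hu⟩ := h
      exact Or.inl ⟨u, hK u, congrArg Subtype.val hu⟩
    · right
      have h1 := AddSubgroup.add_mem_iff_of_index_two (wp_index (K := K)) (a := y') (b := δ)
      rw [mem_wp, mem_wp, mem_wp] at h1
      obtain ⟨u, hu⟩ := h1.2 (iff_of_false h hδK)
      exact ⟨u, hK u, congrArg Subtype.val hu⟩
  · have hlt : ({0, 1} : Finset K).card < Fintype.card K :=
      lt_of_le_of_lt Finset.card_le_two (by omega)
    obtain ⟨c, hc⟩ : ∃ c, c ∉ ({0, 1} : Finset K) := by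
      by_contra hcon
      push Not at hcon
      have h3 := Finset.eq_univ_iff_forall.2 hcon
      rw [h3, Finset.card_univ] at hlt
      omega
    simp only [Finset.mem_insert, Finset.mem_singleton, not_or] at hc
    refine ⟨c, hK c, ?_, ?_⟩
    · intro h; exact hc.1 (Subtype.ext h)
    · intro h; exact hc.2 (Subtype.ext h)
  · intro B hB hB0 hB1
    let B' : K := ⟨B, hB⟩
    have hsq : IsSquare B' :=
      FiniteField.isSquare_of_char_two (CharP.eq K (ringChar.charP K) inferInstance) B'
    obtain ⟨b, hb⟩ := hsq
    have hb0 : b ≠ 0 := by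
      rintro rfl
      apply hB0
      have := congrArg Subtype.val hb
      simpa [B'] using this
    have hb1 : b ≠ 1 := by
      rintro rfl
      apply hB1
      have := congrArg Subtype.val hb
      simpa [B'] using this
    obtain ⟨x, y, z, h1, h2, h3, h4, h5⟩ := exists_triple h16 hb0 hb1 hδK
    rw [pow_two, ← hb] at h5
    refine ⟨x, y, z, hK x, hK y, hK z, ?_, ?_, ?_, congrArg Subtype.val h4,
      congrArg Subtype.val h5⟩
    · exact fun h => h1 (Subtype.ext h)
    · exact fun h => h2 (Subtype.ext h)
    · exact fun h => h3 (Subtype.ext h)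

theorem poly1 {ε D p q X t : F} :
    D * (X + ε * t) ^ 3 + p * ((X + ε * t) ^ 2 * t) + q * ((X + ε * t) * t ^ 2) + t ^ 3 =
      D * X ^ 3 + ((D * ε + p) * (X ^ 2 * t) + (D * ε ^ 2 + q) * (X * t ^ 2)) +
        (D * ε ^ 3 + p * ε ^ 2 + q * ε + 1) * t ^ 3 := by
  grind

theorem poly2 {D T x y : F} :
    (D + T) * x ^ 3 + T * y ^ 3 =
      D * x ^ 3 + T * (x ^ 2 * (x + y) + x * (x + y) ^ 2) + T * (x + y) ^ 3 := by
  grind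

end lift
end KimAux

/-- Kim-type APN functions on `𝔽_{q²}` with coefficients in the subfield `𝔽_q`, `q = 2^m`,
`m ≥ 4`, are affine equivalent to one of the Gold functions `x ↦ x³` or `x ↦ x^{2^{m-1}+1}`.
Membership of `a` in the subfield `𝔽_q` is expressed as `a ^ (2^m) = a`. -/
theorem kim_type_APN_subfield_coeffs_affine_equiv_Gold
    (m : ℕ) (hm : 4 ≤ m) (F : Type*) [Field F] [Fintype F]
    (hcard : Fintype.card F = 2 ^ (2 * m))
    (a₁ a₂ a₃ : F)
    (ha₁ : a₁ ^ (2 ^ m) = a₁) (ha₂ : a₂ ^ (2 ^ m) = a₂) (ha₃ : a₃ ^ (2 ^ m) = a₃)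
    (f : F → F)
    (hf : ∀ x : F, f x = x ^ (3 * 2 ^ m) + a₁ * x ^ (2 * 2 ^ m + 1)
        + a₂ * x ^ (2 ^ m + 2) + a₃ * x ^ 3)
    (hAPN : IsAPN f) :
    AffEquiv f (fun x : F => x ^ 3) ∨ AffEquiv f (fun x : F => x ^ (2 ^ (m - 1) + 1)) := by
  have : Fact (Nat.Prime 2) := ⟨Nat.prime_two⟩
  have : CharP F 2 := charP_of_card_eq_prime_pow (f := 2 * m) (by rw [← hcard])
  obtain ⟨σ, hσ, hσσ, h16, ω, hω⟩ := KimAux.setup (F := F) m hcard hm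
  obtain ⟨hAS, ⟨c0, hc0, hc00, hc01⟩, hTr⟩ := KimAux.lift_facts h16 hω
  rw [← hσ] at ha₁ ha₂ ha₃
  have hf' : ∀ x, f x = σ x ^ 3 + a₁ * (σ x ^ 2 * x) + a₂ * (σ x * x ^ 2) + a₃ * x ^ 3 := by
    intro x
    rw [hf, hσ, pow_add, pow_add, pow_mul', pow_mul', pow_one]
  set D := 1 + a₁ + a₂ + a₃ with hDdef
  have hσD : σ D = D := by simp only [hDdef, map_add, map_one, ha₁, ha₂, ha₃]
  have hf0 : f 0 = 0 := by rw [hf', map_zero]; ring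
  -- f is homogeneous of degree three over the subfield
  have hhom : ∀ x, x ≠ 0 → f x ≠ 0 := by
    intro x hx h
    refine KimAux.apn_ne hAPN hf0 hx (mul_ne_zero hc00 hx) (?_ : c0 * x ≠ x) ?_
    · intro h1; apply hc01
      have : (c0 - 1) * x = 0 := by linear_combination h1
      rcases mul_eq_zero.1 this with h | h
      · exact sub_eq_zero.1 h
      · exact absurd h hx
    · have h1 : f (c0 * x) = c0 ^ 3 * f x := by
        rw [hf', hf', map_mul, hc0]; ring
      have h2 : f (c0 * x + x) = (c0 + 1) ^ 3 * f x := by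
        rw [hf', hf', map_add, map_mul, hc0]; ring
      rw [h1, h2, h]; ring
  have hD : D ≠ 0 := by
    have := hhom 1 one_ne_zero
    rw [hf', map_one] at this
    intro h; apply this; rw [← h, hDdef]; ring
  have hft : ∀ x, f x = D * x ^ 3 + (1 + a₂) * (x ^ 2 * (x + σ x))
      + (1 + a₁) * (x * (x + σ x) ^ 2) + (x + σ x) ^ 3 := by
    intro x; rw [hf', hDdef]; grind
  have hσy : σ ((a₁ + a₂) / D) = (a₁ + a₂) / D := by
    rw [map_div₀, map_add, ha₁, ha₂, hσD]
  have hyD : (a₁ + a₂) / D * D = a₁ + a₂ := div_mul_cancel₀ _ hD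
  rcases hAS _ hσy with ⟨ε, hε, hε2⟩ | ⟨z, hz, hz2⟩
  swap
  · exfalso
    have hx : σ (z + ω) = z + ω + 1 := by rw [map_add, hz, hω]; ring
    refine KimAux.apn_ne hAPN hf0 (a := 1) (x := z + ω) one_ne_zero ?_ ?_ ?_
    · intro h; rw [h, map_zero] at hx; simp at hx
    · intro h; rw [h, map_one] at hx; grind
    · have h1 : (z + ω) ^ 2 + (z + ω) = (a₁ + a₂) / D := by grind
      have h2 : D * ((z + ω) ^ 2 + (z + ω)) = a₁ + a₂ := by rw [h1, mul_comm, hyD]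
      have hx2 : σ (z + ω + 1) = z + ω := by rw [map_add, map_one, hx]; grind
      rw [hft, hft 1, hft (z + ω + 1), hx, hx2, map_one]
      generalize z + ω = x at *
      grind
  have hDε : D * (ε ^ 2 + ε) = a₁ + a₂ := by rw [hε2, mul_comm, hyD]
  obtain ⟨hLinj, hLaff⟩ := KimAux.L_affine hσσ hε
  obtain ⟨P, hP⟩ : ∃ P, P = D * ε + 1 + a₂ := ⟨_, rfl⟩
  obtain ⟨T, hT⟩ : ∃ T, T = D * ε ^ 3 + (1 + a₂) * ε ^ 2 + (1 + a₁) * ε + 1 := ⟨_, rfl⟩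
  have hσP : σ P = P := by simp only [hP, map_add, map_mul, map_one, ha₂, hε, hσD]
  have hσT : σ T = T := by
    simp only [hT, map_add, map_mul, map_pow, map_one, ha₁, ha₂, hε, hσD]
  have hP2 : D * ε ^ 2 + 1 + a₁ = P := by grind
  have hfL : ∀ X, f (X + ε * (X + σ X)) = D * X ^ 3
      + P * (X ^ 2 * (X + σ X) + X * (X + σ X) ^ 2) + T * (X + σ X) ^ 3 := by
    intro X
    have h1 : X + ε * (X + σ X) + σ (X + ε * (X + σ X)) = X + σ X := by
      simp only [map_add, map_mul, hσσ, hε]; grind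
    rw [hft, h1, KimAux.poly1, ← add_assoc (D * ε), ← add_assoc (D * ε ^ 2), hP2, ← hP, ← hT]
    ring
  by_cases hB0 : P + T = 0
  · left
    obtain ⟨M, hM1, hM2, hM3⟩ := KimAux.affine_inv hσσ (α := D + T) (β := T)
      (by rw [map_add, hσD, hσT]) hσT (by rw [add_assoc]; intro h; apply hD; grind)
    refine ⟨M, _, KimAux.affine_of_add hM1 hM2, hLaff, fun x => ?_⟩
    have hPT : P = T := by
      clear hf hf' hft hfL hAS hTr hhom
      grind
    refine (hM3 (x ^ 3)).symm.trans ?_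
    rw [hfL, map_pow, KimAux.poly2, hPT]
  by_cases hB1 : P + T = D
  · right
    rcases hAS 1 (map_one σ) with ⟨θ, hθ, hθ2⟩ | ⟨z, hz, hz2⟩
    · obtain ⟨hL2inj, hL2aff⟩ := KimAux.L_affine hσσ hθ
      obtain ⟨M, hM1, hM2, hM3⟩ := KimAux.affine_inv hσσ (α := D * θ + P) (β := D * θ ^ 2 + P)
        (by rw [map_add, map_mul, hσD, hσP, hθ]) (by rw [map_add, map_mul, map_pow, hσD, hσP, hθ])
        (by intro h; apply hD; grind)
      have hroot : Function.Bijective (frobenius F 2) :=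
        bijective_frobenius F 2
      let R := Equiv.ofBijective _ hroot
      have hR : ∀ y, R.symm (y ^ 2) = y := fun y => R.symm_apply_apply y
      refine ⟨fun y => R.symm (M y),
        fun x => (x + θ * (x + σ x)) + ε * ((x + θ * (x + σ x)) + σ (x + θ * (x + σ x))),
        KimAux.affine_of_add (R.symm.bijective.comp hM1) ?_,
        KimAux.affine_of_add (hLaff.1.comp hL2aff.1) ?_, fun x => ?_⟩
      · intro x y
        apply R.injective
        rw [R.apply_symm_apply, hM2]
        change _ = frobenius F 2 _
        rw [map_add]
        change _ = R _ + R _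
        rw [R.apply_symm_apply, R.apply_symm_apply]
      · intro x y
        simp only [map_add, map_mul]; ring
      · simp only
        rw [← hR (x ^ (2 ^ (m - 1) + 1))]
        congr 1
        have h1 : (x ^ (2 ^ (m - 1) + 1)) ^ 2 = x ^ 2 * σ x := by
          have : 2 ^ m = 2 ^ (m - 1) * 2 := by
            rw [← pow_succ]; congr 1; omega
          rw [hσ, this]; ring
        rw [h1, ← hM3 (x ^ 2 * σ x), hfL]
        congr 1
        rw [map_mul, map_pow, hσσ]
        have h2 : x + θ * (x + σ x) + σ (x + θ * (x + σ x)) = x + σ x := by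
          simp only [map_add, map_mul, hσσ, hθ]; grind
        rw [h2]
        have hTe : T = D + P := by grind
        rw [hTe]
        have hθ' : θ ^ 2 = θ + 1 := by grind
        generalize σ x = y
        clear_value D
        clear hB1 hTe hT hP hP2 hDε hε2 h2
        have hD3 : θ ^ 3 = 1 := by grind
        grind
    · exfalso
      have hx : σ (z + ω) = z + ω + 1 := by rw [map_add, hz, hω]; ring
      have hx0 : z + ω ≠ 0 := by
        intro h; rw [h, map_zero] at hx; simp at hx
      have h1 := hhom (z + ω + ε * (z + ω + σ (z + ω))) (by
        intro h
        apply hx0; apply hLinj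
        simp only [h, map_zero]; ring)
      apply h1
      rw [hfL, hx]
      have h2 : (z + ω) ^ 2 + (z + ω) = 1 := by grind
      generalize z + ω = x at *
      have h3 : x ^ 3 = 1 := by grind
      grind
  exfalso
  obtain ⟨x, y, z, hx, hy, hz, hxy, hxz, hyz, h2, h3⟩ := hTr ((P + T) / D)
    (by rw [map_div₀, map_add, hσP, hσT, hσD]) (div_ne_zero hB0 hD)
    (by rw [Ne, div_eq_one_iff_eq hD]; exact hB1)
  have hid := KimAux.triple_identity hω rfl hx hy hz
    (by rw [mul_div_cancel₀ _ hD]) h2 h3 _ hfL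
  have hne : ∀ c r : F, c ≠ 0 → σ r = r → c * (r + ω) ≠ 0 := by
    intro c r hc hr h
    rcases mul_eq_zero.1 h with h | h
    · exact hc h
    · have : r = ω := by grind
      rw [this, hω] at hr; grind
  have hadd : ∀ a b : F, a ≠ b → a + b ≠ 0 := by
    intro a b h h1; apply h; grind
  have hL0 : ∀ X, X ≠ 0 → X + ε * (X + σ X) ≠ 0 := by
    intro X hX h
    apply hX; apply hLinj
    simp only [h, map_zero]; ring
  refine KimAux.apn_ne hAPN hf0 (hL0 _ (hne _ _ (hadd _ _ hxz) hy))
    (hL0 _ (hne _ _ (hadd _ _ hyz) hx)) ?_ ?_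
  · intro h
    have h := hLinj h
    apply hne (x + y) z (hadd _ _ hxy) hz
    grind
  · rw [← hid]
    congr 2
    simp only [map_add]; ring
end
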